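/- arXiv:2111.02179 — 2 statements merged into one kernel-verified Lean document; each statement's English description precedes it below -/
import Mathlib

section
/- Let (A, φ) be a noncommutative probability space and Φ : T(T_+(A)) → ℂ the character extending φ. Let (κ, β, ρ) be the unique triple of infinitesimal characters with Φ = exp*(ρ) = E_≺(κ) = E_≻(β). Then for every word w = a_1⋯a_n ∈ T_+(A): κ(w) = r_n(a_1,…,a_n), β(w) = b_n(a_1,…,a_n), and ρ(w) = h_n(a_1,…,a_n), the free, Boolean and monotone cumulants of (A, φ). -/
open scoped BigOperators

/-- Planar rooted trees (rose trees). -/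
inductive PTree : Type
  | node : List PTree → PTree

namespace PTree

/-- The single-vertex tree (a leaf). -/
abbrev leaf : PTree := .node []

/-- Subtree at a given path from the root (entries select children). -/
def subtreeAt : List ℕ → PTree → Option PTree
  | [], t => some t
  | i :: p, node cs => (cs[i]?).bind (subtreeAt p)

/-- `p` is (the path of) a vertex of `t`. -/
def IsVertex (t : PTree) (p : List ℕ) : Prop := (subtreeAt p t).isSome

/-- `p` is a leaf of `t`. -/
def IsLeafAt (t : PTree) (p : List ℕ) : Prop := subtreeAt p t = some leaf

/-- `p` is an internal (non-leaf) vertex of `t`. -/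
def IsInternalAt (t : PTree) (p : List ℕ) : Prop :=
  ∃ cs, subtreeAt p t = some (node cs) ∧ cs ≠ []

/-- Schröder trees: every internal vertex has at least two children. -/
inductive IsSchroder : PTree → Prop
  | leaf : IsSchroder (node [])
  | node (cs : List PTree) : 2 ≤ cs.length → (∀ c ∈ cs, IsSchroder c) → IsSchroder (node cs)

/-- Number of leaves of a tree. -/
noncomputable def numLeaves (t : PTree) : ℕ := Nat.card {p : List ℕ // IsLeafAt t p}

/-- Number of sectors between consecutive leaves. -/
noncomputable def numSectors (t : PTree) : ℕ := numLeaves t - 1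

/-- Number of internal vertices. -/
noncomputable def numInternal (t : PTree) : ℕ := Nat.card {p : List ℕ // IsInternalAt t p}

/-- The set of Schröder trees with `n+1` leaves. -/
def ST (n : ℕ) : Set PTree := {t | IsSchroder t ∧ numLeaves t = n + 1}

/-- Number of surjective strictly order-preserving maps from the poset of internal
vertices of `t` (i.e. the vertex poset of the skeleton `sk(t)`, with the root minimal,
the order being the ancestor/prefix order) onto `{1, …, k}`. This is `ω_k(sk(t))`. -/
noncomputable def omegaSkK (t : PTree) (k : ℕ) : ℕ :=
  Nat.card {f : {p : List ℕ // IsInternalAt t p} → Fin k //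
    Function.Surjective f ∧ ∀ v w, v.1 <+: w.1 → v ≠ w → f v < f w}

/-- The Murua coefficient `ω(sk(t))` of the skeleton of `t`. -/
noncomputable def omegaSk (t : PTree) : ℂ :=
  ∑ k ∈ Finset.Icc 1 (numInternal t), ((-1 : ℂ) ^ (k + 1) / (k : ℂ)) * (omegaSkK t k : ℂ)

/-- The subtree of `t` at path `p` (junk value: a leaf). -/
noncomputable def subtree! (t : PTree) (p : List ℕ) : PTree := (subtreeAt p t).getD leaf

/-- Number of leaves of `t` strictly to the left of the subtree at `p`. -/
noncomputable def leavesBefore (t : PTree) (p : List ℕ) : ℕ :=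
  Nat.card {q : List ℕ // IsLeafAt t q ∧ List.Lex (· < ·) q p ∧ ¬ p <+: q}

/-- Sector number `i` (0-indexed: the sector between the `(i+1)`-st and `(i+2)`-nd leaves of `t`)
lies strictly inside the subtree of `t` rooted at `p`. -/
def SectorIn (t : PTree) (p : List ℕ) (i : ℕ) : Prop :=
  leavesBefore t p ≤ i ∧ i + 2 ≤ leavesBefore t p + numLeaves (subtree! t p)

/-- The internal vertex `v` of `t` owns sector `i`: the sector lies in the corolla at `v`,
i.e. inside the subtree at `v` but not inside the subtree at any strictly deeper vertex. -/
def OwnsSector (t : PTree) (v : List ℕ) (i : ℕ) : Prop :=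
  IsInternalAt t v ∧ SectorIn t v i ∧
    ∀ w, IsInternalAt t w → v <+: w → w ≠ v → ¬ SectorIn t w i

/-- Sectors `i` and `j` belong to the same block of the noncrossing partition `π(t)`. -/
def SameOwner (t : PTree) (i j : ℕ) : Prop := ∃ v, OwnsSector t v i ∧ OwnsSector t v j

open Classical in
/-- `φ_{π(t)}(a_1,…,a_n)`: the product over the blocks of the noncrossing partition `π(t)`
(one block per internal vertex `v`, consisting of the sectors owned by `v`) of `φ` applied to
the ordered product of the corresponding letters of `w`. -/
noncomputable def phiPi {A : Type*} [Ring A] (φ : A → ℂ) (t : PTree) (w : List A) : ℂ :=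
  ∏ᶠ v ∈ {v : List ℕ | IsInternalAt t v},
    φ ((((List.range w.length).filter fun i => OwnsSector t v i).map fun i => w.getD i 0).prod)

/-- A corolla: a root whose (at least two) children are all leaves. -/
def corolla (m : ℕ) : PTree := node (List.replicate m leaf)

/-- `t` is a corolla. -/
def IsCorolla (t : PTree) : Prop := ∃ m, 2 ≤ m ∧ t = corolla m

/-- Graft a tree `s` onto the leftmost leaf of `t`. -/
def graftLeftmost : PTree → PTree → PTree
  | node [], s => s
  | node (c :: cs), s => node (graftLeftmost c s :: cs)

/-- Trees obtained from the single-vertex tree by repeatedly grafting a corolla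
onto the leftmost leaf. -/
inductive IsBST : PTree → Prop
  | single : IsBST leaf
  | graft (t : PTree) (m : ℕ) : IsBST t → 2 ≤ m → IsBST (graftLeftmost t (corolla m))

/-- Schröder trees whose leftmost child of the root is a leaf. -/
def IsPST (t : PTree) : Prop := ∃ cs, t = node (leaf :: cs)

end PTree
section Partitions

open scoped BigOperators

/-- Set partitions of `[n] = {1,…,n}`, modeled as finpartitions of `Fin n`. -/
abbrev NPart (n : ℕ) := Finpartition (Finset.univ : Finset (Fin n))

/-- Noncrossing partitions: there are no `a < b < c < d` with `a, c` in one block and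
`b, d` in a different block. -/
def IsNoncrossing {n : ℕ} (π : NPart n) : Prop :=
  ∀ a b c d : Fin n, a < b → b < c → c < d →
    ∀ V ∈ π.parts, ∀ W ∈ π.parts, a ∈ V → c ∈ V → b ∈ W → d ∈ W → V = W

/-- Interval partitions: every block is an interval of consecutive elements. -/
def IsIntervalPart {n : ℕ} (π : NPart n) : Prop :=
  ∀ V ∈ π.parts, ∀ x ∈ V, ∀ y ∈ V, ∀ z : Fin n, x ≤ z → z ≤ y → z ∈ V

/-- Irreducible noncrossing partitions: `1` and `n` lie in the same block. -/
def IsIrreducibleNC {n : ℕ} (π : NPart n) : Prop :=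
  ∃ V ∈ π.parts, (∀ i : Fin n, i.val = 0 → i ∈ V) ∧ (∀ i : Fin n, i.val = n - 1 → i ∈ V)

/-- `W` is nested in `V`: every element of `W` lies in the interval `[min V, max V]`. -/
def NestedIn {n : ℕ} (W V : Finset (Fin n)) : Prop :=
  ∀ w ∈ W, (∃ a ∈ V, a ≤ w) ∧ (∃ b ∈ V, w ≤ b)

open Classical in
/-- The forest factorial `t(π)!` of the forest of nestings of `π`: the product, over all
blocks `V`, of the number of blocks nested in `V` (the size of the subtree rooted at `V`). -/
noncomputable def forestFactorial {n : ℕ} (π : NPart n) : ℕ :=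
  ∏ V ∈ π.parts, (π.parts.filter fun W => NestedIn W V).card

/-- `f_π(a_1,…,a_n)`: the product over the blocks `V = {i_1 < … < i_s}` of `π` of
`f(a_{i_1},…,a_{i_s})`, for a family of multilinear functionals encoded as `f : List A → ℂ`. -/
noncomputable def blockApply {A : Type*} {n : ℕ} (f : List A → ℂ) (a : Fin n → A)
    (π : NPart n) : ℂ :=
  ∏ V ∈ π.parts, f ((V.sort (· ≤ ·)).map a)

/-- `φ_π(a_1,…,a_n)` for the moment functionals `φ_m(a_1,…,a_m) = φ(a_1 ⋯ a_m)`. -/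
noncomputable def momApply {A : Type*} [Ring A] {n : ℕ} (φ : A → ℂ) (a : Fin n → A)
    (π : NPart n) : ℂ :=
  blockApply (fun l => φ l.prod) a π

/-- `ω_k(t(π))` for the nesting poset of the blocks of `π` (for irreducible `π`, this is
the vertex poset of the tree of nestings, rooted at the outermost block): the number of
surjective strictly order-preserving maps onto `{1,…,k}`. -/
noncomputable def omegaNestK {n : ℕ} (π : NPart n) (k : ℕ) : ℕ :=
  Nat.card {f : {V // V ∈ π.parts} → Fin k // Function.Surjective f ∧
    ∀ V W : {V // V ∈ π.parts}, NestedIn W.1 V.1 → V ≠ W → f V < f W}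

/-- The Murua coefficient `ω(t(π))` of the tree (forest) of nestings of `π`. -/
noncomputable def omegaNest {n : ℕ} (π : NPart n) : ℂ :=
  ∑ k ∈ Finset.Icc 1 π.parts.card, ((-1 : ℂ) ^ (k + 1) / (k : ℂ)) * (omegaNestK π k : ℂ)

/-- The noncrossing partition `π(t)` associated to a Schröder tree `t ∈ ST(n)` equals `π`:
two sectors lie in the same block of `π(t)` (i.e. have the same owning internal vertex)
iff they lie in the same block of `π`. -/
def TreePartEq {n : ℕ} (t : PTree) (π : NPart n) : Prop :=
  ∀ i j : Fin n, PTree.SameOwner t i.val j.val ↔ ∃ V ∈ π.parts, i ∈ V ∧ j ∈ V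

/-- The moment–cumulant relation defining the monotone cumulants `h`. -/
def MonotoneMC {A : Type*} [Ring A] (φ : A → ℂ) (h : List A → ℂ) : Prop :=
  ∀ (m : ℕ), 1 ≤ m → ∀ a : Fin m → A,
    φ (List.ofFn a).prod =
      ∑ᶠ π ∈ {π : NPart m | IsNoncrossing π}, (forestFactorial π : ℂ)⁻¹ * blockApply h a π

/-- The moment–cumulant relation defining the free cumulants `r`. -/
def FreeMC {A : Type*} [Ring A] (φ : A → ℂ) (r : List A → ℂ) : Prop :=
  ∀ (m : ℕ), 1 ≤ m → ∀ a : Fin m → A,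
    φ (List.ofFn a).prod = ∑ᶠ π ∈ {π : NPart m | IsNoncrossing π}, blockApply r a π

/-- The moment–cumulant relation defining the Boolean cumulants `b`. -/
def BooleanMC {A : Type*} [Ring A] (φ : A → ℂ) (b : List A → ℂ) : Prop :=
  ∀ (m : ℕ), 1 ≤ m → ∀ a : Fin m → A,
    φ (List.ofFn a).prod = ∑ᶠ π ∈ {π : NPart m | IsIntervalPart π}, blockApply b a π

end Partitions
section Words

variable {A : Type*}

/-- A word: a nonempty list of elements of `A` (an element `a_1 ⋯ a_n ∈ A^{⊗n}`, `n ≥ 1`). -/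
def WordNE (A : Type*) := {l : List A // l ≠ []}

/-- A sentence: a bar product `w_1 | ⋯ | w_m` of words, an element of the basis of the
double tensor algebra `T(T_+(A))`. The empty sentence is the unit `1`. -/
abbrev Sentence (A : Type*) := List (WordNE A)

open Classical in
/-- Turn a list of lists into a sentence (the lists arising below are always nonempty). -/
noncomputable def mkWords (ls : List (List A)) : Sentence A :=
  (ls.filter fun l => decide (l ≠ [])).attach.map fun x =>
    ⟨x.1, by have h := List.of_mem_filter x.2; simpa using h⟩

/-- Group a list of natural numbers into maximal runs of consecutive integers. -/
def natRuns : List ℕ → List (List ℕ)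
  | [] => []
  | x :: xs =>
    match natRuns xs with
    | (y :: ys) :: rest => if x + 1 = y then (x :: y :: ys) :: rest else [x] :: (y :: ys) :: rest
    | _ => [[x]]

open Classical in
/-- The two sides `a_S ⊗ a_{J^S}` of the cut of a word `w` along a subset `S` of its
letter positions: `a_S` is the subword at the positions of `S` (the unit, i.e. the empty
sentence, if `S = ∅`), and `a_{J^S}` is the bar product of the subwords corresponding to
the maximal intervals of the complement of `S`. -/
noncomputable def wordCut [Zero A] (w : WordNE A) (S : Finset (Fin w.1.length)) :
    Sentence A × Sentence A :=
  (mkWords [(S.sort (· ≤ ·)).map w.1.get],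
   mkWords (((natRuns ((((Finset.univ : Finset (Fin w.1.length)) \ S).sort (· ≤ ·)).map
      Fin.val))).map fun r => r.map fun i => w.1.getD i 0))

/-- All terms of the coproduct `Δ` of `T(T_+(A))` on a sentence:
`Δ(a_1⋯a_n) = Σ_{S ⊆ [n]} a_S ⊗ a_{J^S}`, extended multiplicatively to bar products. -/
noncomputable def sentenceCuts [Zero A] : Sentence A → List (Sentence A × Sentence A)
  | [] => [([], [])]
  | w :: ws => (Finset.univ : Finset (Finset (Fin w.1.length))).toList.flatMap fun S =>
      (sentenceCuts ws).map fun pr => ((wordCut w S).1 ++ pr.1, (wordCut w S).2 ++ pr.2)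

open Classical in
/-- The terms of the half-coproduct `Δ_≺` (sum over `S` containing the first letter,
`Δ_≺(w_1|⋯|w_m) = Δ_≺(w_1) | Δ(w_2|⋯|w_m)`). -/
noncomputable def sentenceCutsPrec [Zero A] : Sentence A → List (Sentence A × Sentence A)
  | [] => []
  | w :: ws => (((Finset.univ : Finset (Finset (Fin w.1.length))).filter
        fun S => ∃ j ∈ S, j.val = 0)).toList.flatMap fun S =>
      (sentenceCuts ws).map fun pr => ((wordCut w S).1 ++ pr.1, (wordCut w S).2 ++ pr.2)

open Classical in
/-- The terms of the half-coproduct `Δ_≻` (sum over `S` not containing the first letter). -/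
noncomputable def sentenceCutsSucc [Zero A] : Sentence A → List (Sentence A × Sentence A)
  | [] => []
  | w :: ws => (((Finset.univ : Finset (Finset (Fin w.1.length))).filter
        fun S => ∀ j ∈ S, j.val ≠ 0)).toList.flatMap fun S =>
      (sentenceCuts ws).map fun pr => ((wordCut w S).1 ++ pr.1, (wordCut w S).2 ++ pr.2)

/-- The convolution product `f * g = m_ℂ ∘ (f ⊗ g) ∘ Δ` on linear functionals of
`T(T_+(A))` (described on the basis of sentences). -/
noncomputable def convW [Zero A] (f g : Sentence A → ℂ) : Sentence A → ℂ :=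
  fun s => ((sentenceCuts s).map fun pr => f pr.1 * g pr.2).sum

/-- The left half-shuffle product `f ≺ g = m_ℂ ∘ (f ⊗ g) ∘ Δ_≺`. -/
noncomputable def precW [Zero A] (f g : Sentence A → ℂ) : Sentence A → ℂ :=
  fun s => ((sentenceCutsPrec s).map fun pr => f pr.1 * g pr.2).sum

/-- The right half-shuffle product `f ≻ g = m_ℂ ∘ (f ⊗ g) ∘ Δ_≻`. -/
noncomputable def succW [Zero A] (f g : Sentence A → ℂ) : Sentence A → ℂ :=
  fun s => ((sentenceCutsSucc s).map fun pr => f pr.1 * g pr.2).sum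

open Classical in
/-- The counit `ε` of `T(T_+(A))` as a functional. -/
noncomputable def epsW : Sentence A → ℂ := fun s => if s = [] then 1 else 0

/-- A character of `T(T_+(A))`: a unital multiplicative functional. -/
def IsCharW (Φ : Sentence A → ℂ) : Prop :=
  Φ [] = 1 ∧ ∀ s t : Sentence A, Φ (s ++ t) = Φ s * Φ t

/-- An infinitesimal character of `T(T_+(A))`: it vanishes on the unit and on bar
products of two or more words. -/
def IsInfCharW (α : Sentence A → ℂ) : Prop :=
  α [] = 0 ∧ ∀ s t : Sentence A, s ≠ [] → t ≠ [] → α (s ++ t) = 0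

/-- Convolution powers `f^{*k}` (with `f^{*0} = ε`). -/
noncomputable def convPowW [Zero A] (f : Sentence A → ℂ) : ℕ → Sentence A → ℂ
  | 0 => epsW
  | k + 1 => convW f (convPowW f k)

/-- Left half-shuffle powers `α^{≺k}`, with `α^{≺0} = ε` and `α^{≺k} = α ≺ α^{≺(k−1)}`. -/
noncomputable def precPowW [Zero A] (α : Sentence A → ℂ) : ℕ → Sentence A → ℂ
  | 0 => epsW
  | k + 1 => precW α (precPowW α k)

/-- Right half-shuffle powers `α^{≻k}`, with `α^{≻0} = ε` and `α^{≻k} = α^{≻(k−1)} ≻ α`. -/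
noncomputable def succPowW [Zero A] (α : Sentence A → ℂ) : ℕ → Sentence A → ℂ
  | 0 => epsW
  | k + 1 => succW (succPowW α k) α

/-- The convolution exponential `exp^*(α) = Σ_{k≥0} α^{*k}/k!`. -/
noncomputable def expStarW [Zero A] (α : Sentence A → ℂ) : Sentence A → ℂ :=
  fun s => ∑ᶠ k : ℕ, ((k.factorial : ℂ))⁻¹ * convPowW α k s

/-- The left half-shuffle exponential `E_≺(α) = Σ_{k≥0} α^{≺k}`. -/
noncomputable def ePrecW [Zero A] (α : Sentence A → ℂ) : Sentence A → ℂ :=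
  fun s => ∑ᶠ k : ℕ, precPowW α k s

/-- The right half-shuffle exponential `E_≻(α) = Σ_{k≥0} α^{≻k}`. -/
noncomputable def eSuccW [Zero A] (α : Sentence A → ℂ) : Sentence A → ℂ :=
  fun s => ∑ᶠ k : ℕ, succPowW α k s

/-- The character `Φ : T(T_+(A)) → ℂ` extending `φ`:
`Φ(w_1|⋯|w_m) = φ(w_1)⋯φ(w_m)` with `φ` applied to the internal product of each word. -/
noncomputable def charW [Monoid A] (φ : A → ℂ) : Sentence A → ℂ :=
  fun s => (s.map fun w => φ w.1.prod).prod

end Words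

/-!
Evaluating a convolution by an infinitesimal character on the sentence formed by the runs of a set
`T` of positions removes one block `S` from `T`: inside a run of `T` for `*`, inside the first run
and containing its first position for `≺`, an initial interval of `T` for `≻`. Hence the `k`-th
power on a word sums, over the partitions with `k` blocks, the number of orders in which the blocks
can be removed. For `≺` and `≻` the next block must contain the least remaining position, so the
order is forced and exactly the noncrossing, respectively the interval partitions survive. For `*`
the orders are the linear extensions of the forest of nestings `t(π)`, of which there are
`k! / t(π)!` by the hook length formula. The three exponentials therefore turn the values on words
into solutions of the three moment-cumulant relations, and each relation determines its cumulants
by induction on the length, because the one-block partition has a nonzero coefficient.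
-/

section Runs

lemma natRuns_eq_splitBy (l : List ℕ) : natRuns l = l.splitBy fun x y => x + 1 == y := by
  induction l with
  | nil => rfl
  | cons x xs ih =>
    obtain _ | ⟨y, l⟩ := xs
    · rfl
    obtain ⟨hflat, hnil, hchain, hsep⟩ := List.splitBy_eq_iff.1 ih.symm
    rw [natRuns, eq_comm, List.splitBy_eq_iff]
    rcases hruns : natRuns (y :: l) with _ | ⟨_ | ⟨z, zs⟩, rest⟩
    · simp [hruns] at hflat
    · simp [hruns] at hnil
    rw [hruns] at hflat hnil hchain hsep
    obtain ⟨rfl, rfl⟩ : y = z ∧ l = zs ++ rest.flatten := by simpa using hflat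
    by_cases hxy : x + 1 = y <;>
      simpa [hxy, List.isChain_cons] using And.intro hnil (And.intro hchain hsep)

lemma flatten_natRuns (l : List ℕ) : (natRuns l).flatten = l := by
  rw [natRuns_eq_splitBy, List.flatten_splitBy]

lemma natRuns_append {l₁ l₂ : List ℕ} (h : ∀ x ∈ l₁, ∀ y ∈ l₂, x + 1 < y) :
    natRuns (l₁ ++ l₂) = natRuns l₁ ++ natRuns l₂ := by
  simp only [natRuns_eq_splitBy]
  refine List.splitBy_append fun x hx y hy => ?_
  simpa using (h x (List.mem_of_mem_getLast? hx) y (List.mem_of_mem_head? hy)).ne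

lemma natRuns_range' {s n : ℕ} (hn : n ≠ 0) : natRuns (List.range' s n) = [List.range' s n] := by
  rw [natRuns_eq_splitBy]
  refine List.splitBy_of_isChain (by simpa using hn) ?_
  exact (List.isChain_range' s n 1).imp fun x y hxy => by simp [hxy]

lemma natRuns_map_add (s : ℕ) (l : List ℕ) :
    natRuns (l.map (s + ·)) = (natRuns l).map (List.map (s + ·)) := by
  induction l with
  | nil => rfl
  | cons x xs ih =>
    rw [List.map_cons, natRuns, ih, natRuns]
    rcases natRuns xs with _ | ⟨_ | ⟨y, ys⟩, rest⟩
    · rfl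
    · rfl
    · simp only [List.map_cons, add_assoc, Nat.add_left_cancel_iff]
      split <;> rfl

end Runs

section SentencesAtPositions

lemma sort_union_of_forall_lt {ι : Type*} [LinearOrder ι] {T U : Finset ι}
    (h : ∀ x ∈ T, ∀ y ∈ U, x < y) :
    (T ∪ U).sort (· ≤ ·) = T.sort (· ≤ ·) ++ U.sort (· ≤ ·) := by
  have hlist : (T.sort (· ≤ ·) ++ U.sort (· ≤ ·)).toFinset = T ∪ U := by simp
  have hsep : ∀ x ∈ T.sort (· ≤ ·), ∀ y ∈ U.sort (· ≤ ·), x < y := by simpa using h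
  rw [← hlist, List.toFinset_sort]
  · exact List.pairwise_append.2 ⟨T.pairwise_sort _, U.pairwise_sort _,
      fun x hx y hy => (hsep x hx y hy).le⟩
  · exact List.nodup_append.2 ⟨T.sort_nodup _, U.sort_nodup _,
      fun x hx y hy => (hsep x hx y hy).ne⟩

lemma sort_Ico (s e : ℕ) : (Finset.Ico s e).sort (· ≤ ·) = List.range' s (e - s) := by
  have hlist : (List.range' s (e - s)).toFinset = Finset.Ico s e := by
    ext x
    simp only [List.mem_toFinset, List.mem_range'_1, Finset.mem_Ico]
    omega
  rw [← hlist, List.toFinset_sort _ List.nodup_range']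
  exact List.pairwise_le_range'

variable {A : Type*}

/-- The letters of a word; a named projection, since `WordNE` is not reducible to a subtype. -/
def WordNE.letters (w : WordNE A) : List A := w.1

lemma WordNE.letters_injective : Function.Injective (WordNE.letters (A := A)) :=
  Subtype.val_injective

lemma map_letters_mkWords (ls : List (List A)) :
    (mkWords ls).map WordNE.letters = ls.filter (!·.isEmpty) := by
  classical
  rw [show ls.filter (!·.isEmpty) = ls.filter fun l => decide (l ≠ []) by
    congr! with l; cases l <;> simp]
  exact List.map_map.trans (List.attach_map_subtype_val _)

lemma mkWords_eq_iff {ls : List (List A)} {s : Sentence A} :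
    mkWords ls = s ↔ ls.filter (!·.isEmpty) = s.map WordNE.letters := by
  rw [← map_letters_mkWords, (List.map_injective_iff.2 WordNE.letters_injective).eq_iff]

lemma mkWords_nil : mkWords ([] : List (List A)) = [] := rfl

lemma mkWords_append (l₁ l₂ : List (List A)) :
    mkWords (l₁ ++ l₂) = mkWords l₁ ++ mkWords l₂ := by
  rw [mkWords_eq_iff, List.map_append, map_letters_mkWords, map_letters_mkWords,
    List.filter_append]

lemma mkWords_singleton_nil : mkWords [([] : List A)] = [] :=
  mkWords_eq_iff.2 rfl

lemma mkWords_singleton {l : List A} (h : l ≠ []) : mkWords [l] = [⟨l, h⟩] :=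
  mkWords_eq_iff.2 (List.filter_eq_self.2 (by simp [h]))

/-- The subword of `a 0, a 1, …` at the positions of `S`, as a sentence of at most one word: the
left leg `a_S` of the coproduct. -/
noncomputable def subwordAt (a : ℕ → A) (S : Finset ℕ) : Sentence A :=
  mkWords [(S.sort (· ≤ ·)).map a]

/-- The bar product of the subwords of `a 0, a 1, …` at the maximal runs of consecutive elements
of `T`. Every sentence that the coproduct produces from a word has this form. -/
noncomputable def sentenceAt (a : ℕ → A) (T : Finset ℕ) : Sentence A :=
  mkWords ((natRuns (T.sort (· ≤ ·))).map (List.map a))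

lemma subwordAt_empty (a : ℕ → A) : subwordAt a ∅ = [] := by
  simp [subwordAt, mkWords_singleton_nil]

lemma subwordAt_ne_nil (a : ℕ → A) {S : Finset ℕ} (hS : S.Nonempty) : subwordAt a S ≠ [] := by
  rw [subwordAt, mkWords_singleton (List.ne_nil_of_length_pos (by simpa using hS))]
  simp

lemma sentenceAt_empty (a : ℕ → A) : sentenceAt a ∅ = [] := by
  simp [sentenceAt, natRuns, mkWords_nil]

lemma sentenceAt_union (a : ℕ → A) {T U : Finset ℕ} (h : ∀ x ∈ T, ∀ y ∈ U, x + 1 < y) :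
    sentenceAt a (T ∪ U) = sentenceAt a T ++ sentenceAt a U := by
  rw [sentenceAt, sort_union_of_forall_lt fun x hx y hy => (Nat.lt_succ_self x).trans (h x hx y hy),
    natRuns_append (by simpa using h), List.map_append, mkWords_append]
  rfl

lemma sentenceAt_Ico (a : ℕ → A) (s e : ℕ) :
    sentenceAt a (Finset.Ico s e) = subwordAt a (Finset.Ico s e) := by
  rcases Nat.lt_or_ge s e with h | h
  · rw [sentenceAt, subwordAt, sort_Ico, natRuns_range' (Nat.sub_pos_of_lt h).ne',
      List.map_singleton]
  · rw [Finset.Ico_eq_empty_of_le h, sentenceAt_empty, subwordAt_empty]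

lemma flatten_map_letters_sentenceAt (a : ℕ → A) (T : Finset ℕ) :
    ((sentenceAt a T).map WordNE.letters).flatten = (T.sort (· ≤ ·)).map a := by
  rw [sentenceAt, map_letters_mkWords, List.flatten_filter_not_isEmpty, ← List.map_flatten,
    flatten_natRuns]

lemma sentenceAt_ne_nil (a : ℕ → A) {T : Finset ℕ} (hT : T.Nonempty) : sentenceAt a T ≠ [] := by
  intro h
  have hcard : 0 = T.card := by
    simpa [h] using congrArg List.length (flatten_map_letters_sentenceAt a T)
  exact hT.card_ne_zero hcard.symm

lemma subwordAt_congr {a b : ℕ → A} {S : Finset ℕ} (h : ∀ i ∈ S, a i = b i) :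
    subwordAt a S = subwordAt b S := by
  rw [subwordAt, subwordAt, List.map_congr_left (by simpa using h)]

lemma sentenceAt_congr {a b : ℕ → A} {T : Finset ℕ} (h : ∀ i ∈ T, a i = b i) :
    sentenceAt a T = sentenceAt b T := by
  rw [sentenceAt, sentenceAt,
    List.map_congr_left fun r hr => List.map_congr_left fun i hi => h i ?_]
  rw [← Finset.mem_sort (· ≤ ·), ← flatten_natRuns (T.sort _)]
  exact List.mem_flatten_of_mem hr hi

lemma sort_map_addLeftEmbedding (s : ℕ) (T : Finset ℕ) :
    (T.map (addLeftEmbedding s)).sort (· ≤ ·) = (T.sort (· ≤ ·)).map (s + ·) :=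
  (Finset.map_sort (addLeftEmbedding s) T (· ≤ ·) (· ≤ ·) (by simp)).symm

lemma subwordAt_map_addLeftEmbedding (a : ℕ → A) (s : ℕ) (S : Finset ℕ) :
    subwordAt a (S.map (addLeftEmbedding s)) = subwordAt (fun i => a (s + i)) S := by
  rw [subwordAt, sort_map_addLeftEmbedding, List.map_map]
  rfl

lemma sentenceAt_map_addLeftEmbedding (a : ℕ → A) (s : ℕ) (T : Finset ℕ) :
    sentenceAt a (T.map (addLeftEmbedding s)) = sentenceAt (fun i => a (s + i)) T := by
  rw [sentenceAt, sort_map_addLeftEmbedding, natRuns_map_add, List.map_map]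
  simp only [sentenceAt, Function.comp_def, List.map_map]

lemma sum_powerset_map {ι κ M : Type*} [AddCommMonoid M] (f : ι ↪ κ)
    (T : Finset ι) (F : Finset κ → M) :
    ∑ S ∈ (T.map f).powerset, F S = ∑ S ∈ T.powerset, F (S.map f) := by
  refine (Finset.sum_nbij (Finset.map f) (by simp) (Finset.map_injective f).injOn ?_
    fun _ _ => rfl).symm
  intro S hS
  obtain ⟨U, hU, rfl⟩ := Finset.subset_map_iff.1 (Finset.mem_powerset.1 hS)
  exact ⟨U, by simpa using hU, rfl⟩

/-- The shift `Fin n ↪ ℕ` identifying `Fin n` with the run `{s, …, s + n - 1}`. -/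
def runEmbedding (s n : ℕ) : Fin n ↪ ℕ := Fin.valEmbedding.trans (addLeftEmbedding s)

lemma map_univ_runEmbedding (s n : ℕ) :
    Finset.univ.map (runEmbedding s n) = Finset.Ico s (s + n) := by
  rw [runEmbedding, ← Finset.map_map, Fin.map_valEmbedding_univ, Nat.Iio_eq_range,
    Finset.range_eq_Ico, Finset.map_add_left_Ico, add_zero]

lemma wordCut_eq [Zero A] (w : WordNE A) (S : Finset (Fin w.1.length)) :
    wordCut w S =
      (subwordAt (fun i => w.1.getD i 0) (S.map Fin.valEmbedding),
        sentenceAt (fun i => w.1.getD i 0) (Sᶜ.map Fin.valEmbedding)) := by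
  have hsort (U : Finset (Fin w.1.length)) :
      (U.map Fin.valEmbedding).sort (· ≤ ·) = (U.sort (· ≤ ·)).map Fin.val :=
    (Finset.map_sort Fin.valEmbedding U (· ≤ ·) (· ≤ ·) (by simp)).symm
  have hget : w.1.get = (fun i => w.1.getD i 0) ∘ Fin.val := by
    ext i
    simp
  rw [wordCut, hget, subwordAt, sentenceAt, hsort, hsort, List.map_map,
    Finset.compl_eq_univ_sdiff]

lemma wordCut_eq_of_run [Zero A] (a : ℕ → A) (s : ℕ) {w : WordNE A}
    (hw : w.1 = (List.range' s w.1.length).map a) (S : Finset (Fin w.1.length)) :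
    wordCut w S = (subwordAt a (S.map (runEmbedding s _)),
      sentenceAt a (Finset.Ico s (s + w.1.length) \ S.map (runEmbedding s _))) := by
  have hletter (U : Finset (Fin w.1.length)) :
      ∀ i ∈ U.map Fin.valEmbedding, w.1.getD i 0 = a (s + i) := by
    simp only [Finset.forall_mem_map]
    intro i _
    rw [Fin.valEmbedding_apply, List.getD_eq_getElem _ _ i.2, List.getElem_of_eq hw i.2]
    simp
  rw [wordCut_eq, subwordAt_congr (hletter S), sentenceAt_congr (hletter Sᶜ),
    ← subwordAt_map_addLeftEmbedding, ← sentenceAt_map_addLeftEmbedding, Finset.map_map,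
    Finset.map_map, Finset.compl_eq_univ_sdiff, Finset.map_sdiff, ← map_univ_runEmbedding]
  rfl

end SentencesAtPositions

section Convolution

variable {A : Type*}

lemma epsW_nil : epsW ([] : Sentence A) = 1 := by simp [epsW]

lemma epsW_of_ne_nil {s : Sentence A} (h : s ≠ []) : epsW s = 0 := by simp [epsW, h]

lemma IsInfCharW.comp_append {α : Sentence A → ℂ} (hα : IsInfCharW α) {s : Sentence A}
    (hs : s ≠ []) : (fun t => α (s ++ t)) = α s • epsW := by
  funext t
  rcases eq_or_ne t [] with rfl | ht
  · simp [epsW_nil]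
  · simp [hα.2 s t hs ht, epsW_of_ne_nil ht]

lemma sum_map_flatMap_toList {ι β γ M : Type*} [AddCommMonoid M] (s : Finset ι) (L : List β)
    (f : ι → β → γ) (G : γ → M) :
    ((s.toList.flatMap fun i => L.map (f i)).map G).sum =
      ∑ i ∈ s, (L.map fun b => G (f i b)).sum := by
  rw [← Finset.sum_map_toList, List.map_flatMap, List.flatMap_def, List.sum_flatten, List.map_map]
  simp [Function.comp_def]

variable [Zero A]

lemma convW_nil (f g : Sentence A → ℂ) : convW f g [] = f [] * g [] := by
  simp [convW, sentenceCuts]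

lemma convW_cons (f g : Sentence A → ℂ) (w : WordNE A) (ws : Sentence A) :
    convW f g (w :: ws) =
      ∑ S, convW (fun s => f ((wordCut w S).1 ++ s)) (fun s => g ((wordCut w S).2 ++ s)) ws := by
  rw [convW, sentenceCuts, sum_map_flatMap_toList]
  rfl

lemma precW_nil (f g : Sentence A → ℂ) : precW f g [] = 0 := by
  simp [precW, sentenceCutsPrec]

lemma precW_cons (f g : Sentence A → ℂ) (w : WordNE A) (ws : Sentence A) :
    precW f g (w :: ws) = ∑ S : Finset (Fin w.1.length) with ∃ j ∈ S, j.val = 0,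
      convW (fun s => f ((wordCut w S).1 ++ s)) (fun s => g ((wordCut w S).2 ++ s)) ws := by
  rw [precW, sentenceCutsPrec, sum_map_flatMap_toList]
  congr!

lemma succW_nil (f g : Sentence A → ℂ) : succW f g [] = 0 := by
  simp [succW, sentenceCutsSucc]

lemma succW_cons (f g : Sentence A → ℂ) (w : WordNE A) (ws : Sentence A) :
    succW f g (w :: ws) = ∑ S : Finset (Fin w.1.length) with ∀ j ∈ S, j.val ≠ 0,
      convW (fun s => f ((wordCut w S).1 ++ s)) (fun s => g ((wordCut w S).2 ++ s)) ws := by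
  rw [succW, sentenceCutsSucc, sum_map_flatMap_toList]
  congr!

lemma smul_convW (c : ℂ) (f g : Sentence A → ℂ) : convW (c • f) g = c • convW f g := by
  funext s
  simp [convW, mul_assoc, List.sum_map_mul_left]

lemma convW_smul (c : ℂ) (f g : Sentence A → ℂ) : convW f (c • g) = c • convW f g := by
  funext s
  simp [convW, mul_left_comm, List.sum_map_mul_left]

lemma zero_convW (g : Sentence A → ℂ) : convW 0 g = 0 := by
  funext s
  simp [convW]

lemma convW_zero (f : Sentence A → ℂ) : convW f 0 = 0 := by
  funext s
  simp [convW]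

lemma word_eq_map_range' (w : WordNE A) :
    w.1 = (List.range' 0 w.1.length).map fun i => w.1.getD i 0 := by
  refine List.ext_getElem (by simp) fun i hi _ => ?_
  simp [hi]

lemma sentenceAt_getD (w : WordNE A) :
    sentenceAt (fun i => w.1.getD i 0) (Finset.Ico 0 w.1.length) = [w] := by
  rw [sentenceAt_Ico, subwordAt, sort_Ico, Nat.sub_zero, ← word_eq_map_range', mkWords_singleton]
  rfl

lemma wordCut_empty (w : WordNE A) : wordCut w ∅ = ([], [w]) := by
  rw [wordCut_eq, Finset.map_empty, subwordAt_empty, Finset.compl_empty, Fin.map_valEmbedding_univ,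
    Nat.Iio_eq_range, Finset.range_eq_Ico, sentenceAt_getD]

lemma wordCut_univ (w : WordNE A) : wordCut w Finset.univ = ([w], []) := by
  rw [wordCut_eq, Finset.compl_univ, Finset.map_empty, sentenceAt_empty, Fin.map_valEmbedding_univ,
    Nat.Iio_eq_range, Finset.range_eq_Ico, ← sentenceAt_Ico, sentenceAt_getD]

lemma wordCut_fst_ne_nil (w : WordNE A) {S : Finset (Fin w.1.length)} (hS : S.Nonempty) :
    (wordCut w S).1 ≠ [] := by
  rw [wordCut_eq]
  exact subwordAt_ne_nil _ (hS.map (f := Fin.valEmbedding))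

lemma wordCut_snd_ne_nil (w : WordNE A) {S : Finset (Fin w.1.length)} (hS : S ≠ Finset.univ) :
    (wordCut w S).2 ≠ [] := by
  rw [wordCut_eq]
  refine sentenceAt_ne_nil _ (Finset.Nonempty.map ?_)
  rwa [Finset.nonempty_iff_ne_empty, Ne, Finset.compl_eq_empty_iff]

lemma epsW_convW (f : Sentence A → ℂ) : convW epsW f = f := by
  funext s
  induction s generalizing f with
  | nil => simp [convW_nil, epsW_nil]
  | cons w ws ih =>
    rw [convW_cons, Finset.sum_eq_single ∅ (fun S _ hS => ?_) (by simp)]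
    · simp only [wordCut_empty, List.nil_append]
      exact ih _
    · have hzero : (fun s => epsW ((wordCut w S).1 ++ s)) = 0 := funext fun s => epsW_of_ne_nil
        (by simp [wordCut_fst_ne_nil w (Finset.nonempty_iff_ne_empty.2 hS)])
      simp [hzero, zero_convW]

lemma convW_epsW (f : Sentence A → ℂ) : convW f epsW = f := by
  funext s
  induction s generalizing f with
  | nil => simp [convW_nil, epsW_nil]
  | cons w ws ih =>
    rw [convW_cons, Finset.sum_eq_single Finset.univ (fun S _ hS => ?_) (by simp)]
    · simp only [wordCut_univ, List.nil_append]
      exact ih _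
    · have hzero : (fun s => epsW ((wordCut w S).2 ++ s)) = 0 := funext fun s => epsW_of_ne_nil
        (by simp [wordCut_snd_ne_nil w hS])
      simp [hzero, convW_zero]

variable {α : Sentence A → ℂ}

lemma IsInfCharW.convW_append (hα : IsInfCharW α) (F : Sentence A → ℂ) {s : Sentence A}
    (hs : s ≠ []) : convW (fun t => α (s ++ t)) F = α s • F := by
  rw [hα.comp_append hs, smul_convW, epsW_convW]

lemma IsInfCharW.convW_append_right (hα : IsInfCharW α) (F : Sentence A → ℂ) {s : Sentence A}
    (hs : s ≠ []) : convW F (fun t => α (s ++ t)) = α s • F := by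
  rw [hα.comp_append hs, convW_smul, convW_epsW]

lemma IsInfCharW.convW_cons (hα : IsInfCharW α) (F : Sentence A → ℂ) (w : WordNE A)
    (ws : Sentence A) :
    convW α F (w :: ws) =
      ∑ S : Finset (Fin w.1.length) with S.Nonempty,
        α (wordCut w S).1 * F ((wordCut w S).2 ++ ws) + convW α (fun s => F (w :: s)) ws := by
  classical
  rw [_root_.convW_cons, ← Finset.sum_filter_add_sum_filter_not _ Finset.Nonempty]
  congr 1
  · refine Finset.sum_congr rfl fun S hS => ?_
    rw [hα.convW_append _ (wordCut_fst_ne_nil w (Finset.mem_filter.1 hS).2)]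
    rfl
  · simp [Finset.filter_eq', wordCut_empty]

lemma IsInfCharW.precW_cons (hα : IsInfCharW α) (F : Sentence A → ℂ) (w : WordNE A)
    (ws : Sentence A) :
    precW α F (w :: ws) = ∑ S : Finset (Fin w.1.length) with ∃ j ∈ S, j.val = 0,
      α (wordCut w S).1 * F ((wordCut w S).2 ++ ws) := by
  rw [_root_.precW_cons]
  refine Finset.sum_congr rfl fun S hS => ?_
  obtain ⟨j, hj, -⟩ := (Finset.mem_filter.1 hS).2
  rw [hα.convW_append _ (wordCut_fst_ne_nil w ⟨j, hj⟩)]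
  rfl

lemma IsInfCharW.succW_cons (hα : IsInfCharW α) (F : Sentence A → ℂ) (w : WordNE A)
    (ws : Sentence A) :
    succW F α (w :: ws) = ∑ S : Finset (Fin w.1.length) with ∀ j ∈ S, j.val ≠ 0,
      α (wordCut w S).2 * F ((wordCut w S).1 ++ ws) := by
  rw [_root_.succW_cons]
  refine Finset.sum_congr rfl fun S hS => ?_
  have hS' : S ≠ Finset.univ := by
    rintro rfl
    simpa using (Finset.mem_filter.1 hS).2 ⟨0, List.length_pos_iff.2 w.2⟩
  rw [hα.convW_append_right _ (wordCut_snd_ne_nil w hS')]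
  rfl

end Convolution

section Positions

/-- `S` lies in a single run of `T`: everything between two elements of `S` belongs to `T`.
In particular `InRun S S` says that `S` is an interval. -/
def InRun {ι : Type*} [LinearOrder ι] (S T : Finset ι) : Prop :=
  ∀ x ∈ S, ∀ y ∈ S, ∀ z, x ≤ z → z ≤ y → z ∈ T

/-- `S` contains the least element of `T` (for `S ⊆ T`). -/
def ContainsMin {ι : Type*} [LinearOrder ι] (S T : Finset ι) : Prop :=
  ∃ m ∈ S, ∀ x ∈ T, m ≤ x

lemma InRun.subset {ι : Type*} [LinearOrder ι] {S T : Finset ι} (h : InRun S T) : S ⊆ T :=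
  fun x hx => h x hx x hx x le_rfl le_rfl

lemma InRun.mono {ι : Type*} [LinearOrder ι] {S T T' : Finset ι} (h : InRun S T) (hT : T ⊆ T') :
    InRun S T' :=
  fun x hx y hy z hxz hzy => hT (h x hx y hy z hxz hzy)

lemma ContainsMin.nonempty {ι : Type*} [LinearOrder ι] {S T : Finset ι} (h : ContainsMin S T) :
    S.Nonempty :=
  let ⟨m, hm, _⟩ := h
  ⟨m, hm⟩

@[elab_as_elim]
theorem run_induction {p : Finset ℕ → Prop} (empty : p ∅)
    (run_union : ∀ s e U, s < e → (∀ y ∈ U, e < y) → p U → p (Finset.Ico s e ∪ U))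
    (T : Finset ℕ) : p T := by
  classical
  induction T using Finset.strongInduction with
  | H T ih =>
    obtain rfl | hT := T.eq_empty_or_nonempty
    · exact empty
    have hex : ∃ e, T.min' hT ≤ e ∧ e ∉ T :=
      ⟨T.max' hT + 1, (T.min'_le_max' hT).trans (Nat.le_succ _), fun h =>
        (T.le_max' _ h).not_gt (Nat.lt_succ_self _)⟩
    obtain ⟨e, ⟨hle, heT⟩, hlt⟩ := Nat.findX hex
    have hrun : T = Finset.Ico (T.min' hT) e ∪ T.filter (e < ·) := by
      ext x
      simp only [Finset.mem_union, Finset.mem_Ico, Finset.mem_filter]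
      have := T.min'_le x
      grind
    rw [hrun]
    have hmin := T.min'_mem hT
    refine run_union _ _ _ (lt_of_le_of_ne hle fun h => heT (h ▸ hmin)) (by simp) (ih _ ?_)
    exact Finset.filter_ssubset.2 ⟨_, hmin, hle.not_gt⟩

section Run

variable {s e : ℕ} {S U : Finset ℕ}

lemma add_one_lt_of_mem_run (hU : ∀ y ∈ U, e < y) (hS : S ⊆ Finset.Ico s e) :
    ∀ x ∈ S, ∀ y ∈ U, x + 1 < y := fun _ hx y hy =>
  lt_of_le_of_lt (Finset.mem_Ico.1 (hS hx)).2 (hU y hy)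

lemma disjoint_run (hU : ∀ y ∈ U, e < y) : Disjoint (Finset.Ico s e) U :=
  Finset.disjoint_left.2 fun x hx hxU =>
    ((Finset.mem_Ico.1 hx).2.trans (hU x hxU)).false

lemma inRun_run_union_iff (hU : ∀ y ∈ U, e < y) :
    InRun S (Finset.Ico s e ∪ U) ↔ S ⊆ Finset.Ico s e ∨ InRun S U := by
  constructor
  · intro h
    have heT : e ∉ Finset.Ico s e ∪ U := by
      simpa using fun he => (hU e he).false
    by_cases hS : ∃ x ∈ S, x < e
    · obtain ⟨x, hx, hxe⟩ := hS
      refine Or.inl fun y hy => (Finset.mem_union.1 (h.subset hy)).resolve_right fun hyU => heT ?_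
      exact h x hx y hy e hxe.le (hU y hyU).le
    · push Not at hS
      refine Or.inr fun x hx y hy z hxz hzy =>
        (Finset.mem_union.1 (h x hx y hy z hxz hzy)).resolve_left fun hz => ?_
      exact ((hS x hx).trans hxz).not_gt (Finset.mem_Ico.1 hz).2
  · rintro (h | h)
    · refine InRun.mono (fun x hx y hy z hxz hzy => ?_) Finset.subset_union_left
      exact Finset.mem_Ico.2 ⟨(Finset.mem_Ico.1 (h hx)).1.trans hxz,
        hzy.trans_lt (Finset.mem_Ico.1 (h hy)).2⟩
    · exact h.mono Finset.subset_union_right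

lemma inRun_run_union_self_iff (hse : s < e) (hU : ∀ y ∈ U, e < y) :
    InRun (Finset.Ico s e ∪ U) (Finset.Ico s e ∪ U) ↔ U = ∅ := by
  refine ⟨fun h => ?_, fun h => (inRun_run_union_iff hU).2 (Or.inl (by simp [h]))⟩
  rcases (inRun_run_union_iff hU).1 h with h | h
  · exact Finset.subset_empty.1 (disjoint_run hU (Finset.union_subset_right h) subset_rfl)
  · exact absurd (hU s (h.subset (by simp [hse]))) hse.not_gt

lemma containsMin_run_union_iff (hse : s < e) (hU : ∀ y ∈ U, e < y) (hS : S ⊆ Finset.Ico s e ∪ U) :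
    ContainsMin S (Finset.Ico s e ∪ U) ↔ s ∈ S := by
  have hs (x) (hx : x ∈ Finset.Ico s e ∪ U) : s ≤ x := by
    rcases Finset.mem_union.1 hx with hx | hx
    · exact (Finset.mem_Ico.1 hx).1
    · exact (hse.trans (hU x hx)).le
  refine ⟨fun ⟨m, hm, hmin⟩ => ?_, fun h => ⟨s, h, hs⟩⟩
  have hms : m = s := (hmin s (by simp [hse])).antisymm (hs m (hS hm))
  exact hms ▸ hm

lemma run_union_sdiff (hU : ∀ y ∈ U, e < y) (hS : S ⊆ Finset.Ico s e) :
    (Finset.Ico s e ∪ U) \ S = (Finset.Ico s e \ S) ∪ U := by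
  rw [Finset.union_sdiff_distrib,
    Finset.sdiff_eq_self_of_disjoint ((disjoint_run hU).symm.mono_right hS)]

lemma run_union_sdiff_right (hU : ∀ y ∈ U, e < y) (hS : S ⊆ U) :
    (Finset.Ico s e ∪ U) \ S = Finset.Ico s e ∪ U \ S := by
  rw [Finset.union_sdiff_distrib,
    Finset.sdiff_eq_self_of_disjoint ((disjoint_run hU).mono_right hS)]

end Run

variable {A : Type*} {α : Sentence A → ℂ}

lemma sentenceAt_eq_subwordAt (a : ℕ → A) {S : Finset ℕ} (h : InRun S S) :
    sentenceAt a S = subwordAt a S := by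
  induction S using run_induction with
  | empty => rw [sentenceAt_empty, subwordAt_empty]
  | run_union s e U hse hU _ =>
    rw [(inRun_run_union_self_iff hse hU).1 h, Finset.union_empty, sentenceAt_Ico]

lemma IsInfCharW.sentenceAt_eq_zero (hα : IsInfCharW α) (a : ℕ → A) {S : Finset ℕ}
    (h : ¬ InRun S S) : α (sentenceAt a S) = 0 := by
  induction S using run_induction with
  | empty => exact absurd (by simp [InRun]) h
  | run_union s e U hse hU _ =>
    rw [inRun_run_union_self_iff hse hU, ← Ne, ← Finset.nonempty_iff_ne_empty] at h
    rw [sentenceAt_union a (add_one_lt_of_mem_run hU subset_rfl)]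
    exact hα.2 _ _ (sentenceAt_ne_nil a (Finset.nonempty_Ico.2 hse)) (sentenceAt_ne_nil a h)

lemma exists_word_at_run (a : ℕ → A) {s e : ℕ} (hse : s < e) :
    ∃ w : WordNE A, sentenceAt a (Finset.Ico s e) = [w] ∧ s + w.1.length = e ∧
      w.1 = (List.range' s w.1.length).map a := by
  have hne : (List.range' s (e - s)).map a ≠ [] := by simpa using (Nat.sub_pos_of_lt hse).ne'
  refine ⟨⟨_, hne⟩, ?_, ?_, ?_⟩
  · rw [sentenceAt_Ico, subwordAt, sort_Ico, mkWords_singleton]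
  · simpa using Nat.add_sub_of_le hse.le
  · simp

lemma sentenceAt_run_union (a : ℕ → A) {s e : ℕ} {U : Finset ℕ} (hU : ∀ y ∈ U, e < y)
    {w : WordNE A} (hw : sentenceAt a (Finset.Ico s e) = [w]) :
    sentenceAt a (Finset.Ico s e ∪ U) = w :: sentenceAt a U := by
  rw [sentenceAt_union a (add_one_lt_of_mem_run hU subset_rfl), hw, List.singleton_append]

variable [Zero A]

lemma sum_wordCut {M : Type*} [AddCommMonoid M] (a : ℕ → A) {s : ℕ} {w : WordNE A}
    (hw : w.1 = (List.range' s w.1.length).map a) {p : Finset (Fin w.1.length) → Prop}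
    {q : Finset ℕ → Prop} [DecidablePred p] [DecidablePred q]
    (hpq : ∀ S, p S ↔ q (S.map (runEmbedding s _))) (G : Sentence A × Sentence A → M) :
    ∑ S : Finset (Fin w.1.length) with p S, G (wordCut w S) =
      ∑ J ∈ (Finset.Ico s (s + w.1.length)).powerset with q J,
        G (subwordAt a J, sentenceAt a (Finset.Ico s (s + w.1.length) \ J)) := by
  rw [Finset.sum_filter, Finset.sum_filter, ← map_univ_runEmbedding, sum_powerset_map,
    Finset.powerset_univ]
  simp_rw [wordCut_eq_of_run a s hw, hpq, map_univ_runEmbedding]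

lemma mem_map_runEmbedding_self {s n : ℕ} {S : Finset (Fin n)} :
    s ∈ S.map (runEmbedding s n) ↔ ∃ j ∈ S, j.val = 0 := by
  simp [runEmbedding]

open Classical in
lemma filter_containsMin_inRun_run_union {s e : ℕ} {U : Finset ℕ} (hse : s < e)
    (hU : ∀ y ∈ U, e < y) :
    {S ∈ (Finset.Ico s e ∪ U).powerset | ContainsMin S (Finset.Ico s e ∪ U) ∧
      InRun S (Finset.Ico s e ∪ U)} = {S ∈ (Finset.Ico s e).powerset | s ∈ S} := by
  ext S
  simp only [Finset.mem_filter, Finset.mem_powerset]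
  constructor
  · rintro ⟨hS, hmin, hrun⟩
    have hs := (containsMin_run_union_iff hse hU hS).1 hmin
    refine ⟨((inRun_run_union_iff hU).1 hrun).resolve_right fun h => ?_, hs⟩
    exact hse.not_gt (hU s (h.subset hs))
  · rintro ⟨hS, hs⟩
    have hST : S ⊆ Finset.Ico s e ∪ U := hS.trans Finset.subset_union_left
    exact ⟨hST, (containsMin_run_union_iff hse hU hST).2 hs,
      (inRun_run_union_iff hU).2 (Or.inl hS)⟩

open Classical in
theorem IsInfCharW.precW_sentenceAt (hα : IsInfCharW α) (F : Sentence A → ℂ) (a : ℕ → A)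
    (T : Finset ℕ) :
    precW α F (sentenceAt a T) = ∑ S ∈ T.powerset with ContainsMin S T ∧ InRun S T,
      α (subwordAt a S) * F (sentenceAt a (T \ S)) := by
  induction T using run_induction with
  | empty => simp [sentenceAt_empty, precW_nil, Finset.filter_singleton, ContainsMin]
  | run_union s e U hse hU _ =>
    obtain ⟨w, hword, rfl, hw⟩ := exists_word_at_run a hse
    rw [filter_containsMin_inRun_run_union hse hU, sentenceAt_run_union a hU hword,
      hα.precW_cons, sum_wordCut a hw (q := (s ∈ ·)) (fun _ => mem_map_runEmbedding_self.symm)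
        fun c => α c.1 * F (c.2 ++ sentenceAt a U)]
    refine Finset.sum_congr rfl fun S hS => ?_
    rw [run_union_sdiff hU (Finset.mem_powerset.1 (Finset.mem_filter.1 hS).1),
      sentenceAt_union a (add_one_lt_of_mem_run hU Finset.sdiff_subset)]

open Classical in
theorem IsInfCharW.convW_sentenceAt (hα : IsInfCharW α) (F : Sentence A → ℂ) (a : ℕ → A)
    (T : Finset ℕ) :
    convW α F (sentenceAt a T) = ∑ S ∈ T.powerset with S.Nonempty ∧ InRun S T,
      α (subwordAt a S) * F (sentenceAt a (T \ S)) := by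
  induction T using run_induction generalizing F with
  | empty => simp [sentenceAt_empty, convW_nil, hα.1, Finset.filter_singleton]
  | run_union s e U hse hU ih =>
    have hsplit : {S ∈ (Finset.Ico s e ∪ U).powerset | S.Nonempty ∧
        InRun S (Finset.Ico s e ∪ U)} = {S ∈ (Finset.Ico s e).powerset | S.Nonempty} ∪
          {S ∈ U.powerset | S.Nonempty ∧ InRun S U} := by
      ext S
      simp only [Finset.mem_filter, Finset.mem_powerset, Finset.mem_union, inRun_run_union_iff hU]
      have := @InRun.subset _ _ S U
      have := @Finset.subset_union_left _ _ (Finset.Ico s e) U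
      have := @Finset.subset_union_right _ _ (Finset.Ico s e) U
      grind
    have hdisj : Disjoint {S ∈ (Finset.Ico s e).powerset | S.Nonempty}
        {S ∈ U.powerset | S.Nonempty ∧ InRun S U} := by
      rw [Finset.disjoint_left]
      simp only [Finset.mem_filter, Finset.mem_powerset]
      rintro S ⟨hS, hne⟩ ⟨hSU, -⟩
      exact hne.ne_empty ((disjoint_run hU).mono hS hSU |>.eq_bot_of_self)
    obtain ⟨w, hword, rfl, hw⟩ := exists_word_at_run a hse
    rw [hsplit, Finset.sum_union hdisj, sentenceAt_run_union a hU hword, hα.convW_cons, ih]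
    congr 1
    · rw [sum_wordCut a hw (fun S => Finset.map_nonempty.symm)
        fun c => α c.1 * F (c.2 ++ sentenceAt a U)]
      refine Finset.sum_congr rfl fun S hS => ?_
      rw [run_union_sdiff hU (Finset.mem_powerset.1 (Finset.mem_filter.1 hS).1),
        sentenceAt_union a (add_one_lt_of_mem_run hU Finset.sdiff_subset)]
    · refine Finset.sum_congr rfl fun S hS => ?_
      have hSU := Finset.mem_powerset.1 (Finset.mem_filter.1 hS).1
      rw [run_union_sdiff_right hU hSU,
        sentenceAt_run_union a (fun y hy => hU y (Finset.sdiff_subset hy)) hword]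

lemma sum_powerset_notMem {ι M : Type*} [DecidableEq ι] [AddCommMonoid M] (T : Finset ι)
    {i : ι} (hi : i ∈ T) (G : Finset ι → M) :
    ∑ J ∈ T.powerset with i ∉ J, G J = ∑ S ∈ T.powerset with i ∈ S, G (T \ S) := by
  refine Finset.sum_nbij' (T \ ·) (T \ ·) ?_ ?_ ?_ ?_ ?_ <;>
    simp +contextual [hi]

lemma InRun.sdiff_Ico {s e : ℕ} {S : Finset ℕ} (h : InRun S S) (hs : s ∈ S) :
    InRun (Finset.Ico s e \ S) (Finset.Ico s e \ S) := by
  intro x hx y hy z hxz hzy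
  simp only [Finset.mem_sdiff, Finset.mem_Ico] at hx hy ⊢
  exact ⟨⟨hx.1.1.trans hxz, hzy.trans_lt hy.1.2⟩, fun hz => hx.2 (h s hs z hz x hx.1.1 hxz)⟩

open Classical in
theorem IsInfCharW.succW_sentenceAt (hα : IsInfCharW α) (F : Sentence A → ℂ) (a : ℕ → A)
    (T : Finset ℕ) :
    succW F α (sentenceAt a T) = ∑ S ∈ T.powerset with ContainsMin S T ∧ InRun S S,
      α (subwordAt a S) * F (sentenceAt a (T \ S)) := by
  induction T using run_induction with
  | empty => simp [sentenceAt_empty, succW_nil, Finset.filter_singleton, ContainsMin]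
  | run_union s e U hse hU _ =>
    have hfilter : {S ∈ (Finset.Ico s e ∪ U).powerset | ContainsMin S (Finset.Ico s e ∪ U) ∧
        InRun S S} = {S ∈ {S ∈ (Finset.Ico s e).powerset | s ∈ S} | InRun S S} := by
      rw [← filter_containsMin_inRun_run_union hse hU, Finset.filter_filter]
      refine Finset.filter_congr fun S hS => ?_
      have := fun h : InRun S S => h.mono (Finset.mem_powerset.1 hS)
      tauto
    obtain ⟨w, hword, rfl, hw⟩ := exists_word_at_run a hse
    rw [hfilter, sentenceAt_run_union a hU hword, hα.succW_cons,
      sum_wordCut a hw (q := (s ∉ ·)) (by simp [runEmbedding])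
        fun c => α c.2 * F (c.1 ++ sentenceAt a U),
      sum_powerset_notMem _ (by simpa using hse),
      Finset.sum_filter (fun S : Finset ℕ => InRun S S)]
    refine Finset.sum_congr rfl fun S hS => ?_
    obtain ⟨hS, hs⟩ := Finset.mem_filter.1 hS
    rw [Finset.mem_powerset] at hS
    rw [Finset.sdiff_sdiff_eq_self hS]
    split_ifs with hrun
    · rw [run_union_sdiff hU hS, sentenceAt_union a (add_one_lt_of_mem_run hU Finset.sdiff_subset),
        sentenceAt_eq_subwordAt a hrun, sentenceAt_eq_subwordAt a (hrun.sdiff_Ico hs)]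
    · rw [hα.sentenceAt_eq_zero a hrun, zero_mul]

end Positions

section Peeling

variable {ι : Type*} [DecidableEq ι] {T : Finset ι}

lemma exists_parts_eq_erase (π : Finpartition T) {S : Finset ι} (hS : S ∈ π.parts) :
    ∃ σ : Finpartition (T \ S), σ.parts = π.parts.erase S := by
  refine ⟨π.ofSubset (Finset.erase_subset S _) ?_, rfl⟩
  have hdisj : Disjoint ((π.parts.erase S).sup id) S :=
    Finset.disjoint_sup_left.2 fun V hV =>
      π.disjoint (Finset.mem_of_mem_erase hV) hS (Finset.ne_of_mem_erase hV)
  have hsup : S ⊔ (π.parts.erase S).sup id = T := by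
    conv_rhs => rw [← π.sup_parts, ← Finset.insert_erase hS, Finset.sup_insert, id_eq]
  calc (π.parts.erase S).sup id = (S ⊔ (π.parts.erase S).sup id) \ S := by
        rw [sup_sdiff_left_self, hdisj.sdiff_eq_left]
    _ = T \ S := by rw [hsup]

lemma notMem_parts_sdiff {S : Finset ι} (hS : S.Nonempty) (σ : Finpartition (T \ S)) :
    S ∉ σ.parts := fun h =>
  hS.ne_empty (disjoint_self.1 (Finset.disjoint_sdiff.mono_right (σ.le h)))

lemma sum_finpartition_sum_parts {M : Type*} [AddCommMonoid M] (T : Finset ι)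
    (F : Finset ι → Finset (Finset ι) → M) :
    ∑ π : Finpartition T, ∑ S ∈ π.parts, F S (π.parts.erase S) =
      ∑ S ∈ T.powerset with S.Nonempty, ∑ σ : Finpartition (T \ S), F S σ.parts := by
  rw [Finset.sum_sigma', Finset.sum_sigma', eq_comm]
  have hmem {S : Finset ι} (hS : S ∈ T.powerset.filter Finset.Nonempty) : S ⊆ T ∧ S.Nonempty := by
    simpa using hS
  refine Finset.sum_bij (fun p hp => ⟨p.2.extend (hmem (Finset.mem_sigma.1 hp).1).2.ne_empty
    Finset.sdiff_disjoint (Finset.sdiff_union_of_subset (hmem (Finset.mem_sigma.1 hp).1).1), p.1⟩)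
    ?_ ?_ ?_ ?_
  · simp
  · rintro ⟨S, σ⟩ hσ ⟨S', σ'⟩ hσ' h
    obtain ⟨hext, rfl⟩ : _ ∧ S = S' := by simpa using h
    have hS := (hmem (Finset.mem_sigma.1 hσ).1).2
    have hparts : σ.parts = σ'.parts := by
      simpa [notMem_parts_sdiff hS] using congrArg (fun π => π.parts.erase S) hext
    simpa using Finpartition.ext hparts
  · rintro ⟨π, S⟩ hS
    have hS : S ∈ π.parts := (Finset.mem_sigma.1 hS).2
    obtain ⟨σ, hσ⟩ := exists_parts_eq_erase π hS
    refine ⟨⟨S, σ⟩, by simpa using ⟨π.le hS, π.nonempty_of_mem_parts hS⟩, ?_⟩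
    simp only [Sigma.mk.injEq, heq_eq_eq, and_true]
    exact Finpartition.ext ((congrArg (insert S) hσ).trans (Finset.insert_erase hS))
  · rintro ⟨S, σ⟩ hS
    simp [notMem_parts_sdiff (hmem (Finset.mem_sigma.1 hS).1).2]

lemma sum_finpartition_sum_parts_filter {M : Type*} [AddCommMonoid M] (T : Finset ι)
    {R : Finset ι → Prop} [DecidablePred R] (hR : ∀ S, R S → S.Nonempty)
    (F : Finset ι → Finset (Finset ι) → M) :
    ∑ π : Finpartition T, ∑ S ∈ π.parts with R S, F S (π.parts.erase S) =
      ∑ S ∈ T.powerset with R S, ∑ σ : Finpartition (T \ S), F S σ.parts := by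
  simp_rw [Finset.sum_filter]
  rw [sum_finpartition_sum_parts T fun S P => if R S then F S P else 0, Finset.sum_filter]
  refine Finset.sum_congr rfl fun S _ => ?_
  by_cases hS : R S
  · simp [hS, hR S hS]
  · simp [hS]

theorem eq_sum_finpartition_of_peeling {𝕜 : Type*} [CommSemiring 𝕜] {f : Finset ι → 𝕜}
    {u : ℕ → Finset ι → 𝕜} {R : Finset ι → Finset ι → Prop} [∀ T, DecidablePred (R · T)]
    {N : Finset ι → Finset (Finset ι) → 𝕜} (hR : ∀ S T, R S T → S.Nonempty)
    (u_zero : ∀ T, u 0 T = if T = ∅ then 1 else 0)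
    (u_succ : ∀ k T, u (k + 1) T = ∑ S ∈ T.powerset with R S T, f S * u k (T \ S))
    (N_empty : N ∅ ∅ = 1)
    (N_peel : ∀ (T : Finset ι) (π : Finpartition T), T.Nonempty →
      N T π.parts = ∑ S ∈ π.parts with R S T, N (T \ S) (π.parts.erase S))
    (k : ℕ) (T : Finset ι) :
    u k T = ∑ π : Finpartition T with π.parts.card = k, N T π.parts * ∏ V ∈ π.parts, f V := by
  induction k generalizing T with
  | zero =>
    rw [u_zero]
    split_ifs with hT
    · subst hT
      have hparts (π : Finpartition (∅ : Finset ι)) : π.parts = ∅ := π.parts_eq_empty_iff.2 rfl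
      have : Unique (Finpartition (∅ : Finset ι)) :=
        inferInstanceAs (Unique (Finpartition (⊥ : Finset ι)))
      simp [hparts, N_empty]
    · simp [hT]
  | succ k ih =>
    let F (S : Finset ι) (P : Finset (Finset ι)) : 𝕜 :=
      if P.card = k then f S * (N (T \ S) P * ∏ V ∈ P, f V) else 0
    simp_rw [u_succ, ih, Finset.mul_sum, Finset.sum_filter (fun _ => _ = k)]
    rw [← sum_finpartition_sum_parts_filter T (hR · T) F, Finset.sum_filter]
    refine Finset.sum_congr rfl fun π _ => ?_
    split_ifs with hπ
    · have hT : T.Nonempty := by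
        obtain ⟨V, hV⟩ := Finset.card_pos.1 (k.succ_pos.trans_eq hπ.symm)
        exact (π.nonempty_of_mem_parts hV).mono (π.le hV)
      rw [N_peel T π hT, Finset.sum_mul]
      refine Finset.sum_congr rfl fun S hS => ?_
      replace hS := (Finset.mem_filter.1 hS).1
      rw [← Finset.mul_prod_erase _ _ hS]
      simp only [F, Finset.card_erase_of_mem hS, hπ, Nat.add_sub_cancel, if_true]
      ring
    · refine Finset.sum_eq_zero fun S hS => if_neg ?_
      rw [Finset.card_erase_of_mem (Finset.mem_filter.1 hS).1]
      have := Finset.card_pos.2 ⟨S, (Finset.mem_filter.1 hS).1⟩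
      omega

lemma finsum_sum_finpartition_card {M : Type*} [AddCommMonoid M] (G : ℕ → Finpartition T → M) :
    ∑ᶠ k, ∑ π : Finpartition T with π.parts.card = k, G k π = ∑ π, G π.parts.card π := by
  have hsupport : (Function.support fun k => ∑ π : Finpartition T with π.parts.card = k, G k π) ⊆
      Finset.univ.image fun π : Finpartition T => π.parts.card := by
    intro k hk
    obtain ⟨π, hπ, -⟩ := Finset.exists_ne_zero_of_sum_ne_zero hk
    exact Finset.mem_coe.2 (Finset.mem_image.2 ⟨π, Finset.mem_univ π, (Finset.mem_filter.1 hπ).2⟩)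
  rw [finsum_eq_sum_of_support_subset _ hsupport, ← Finset.sum_fiberwise_of_maps_to
    fun π _ => Finset.mem_image_of_mem (fun π : Finpartition T => π.parts.card) (Finset.mem_univ π)]
  refine Finset.sum_congr rfl fun k _ => Finset.sum_congr rfl fun π hπ => ?_
  rw [(Finset.mem_filter.1 hπ).2]

end Peeling

section MinPeeling

variable {ι : Type*} [LinearOrder ι] {T : Finset ι}

open Classical in
lemma exists_filter_containsMin_eq_singleton (π : Finpartition T) (hT : T.Nonempty) :
    ∃ S ∈ π.parts, ContainsMin S T ∧ {V ∈ π.parts | ContainsMin V T} = {S} := by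
  obtain ⟨S, hS, hmS⟩ := π.exists_mem (T.min'_mem hT)
  refine ⟨S, hS, ⟨_, hmS, T.min'_le⟩, ?_⟩
  refine Finset.eq_singleton_iff_unique_mem.2
    ⟨Finset.mem_filter.2 ⟨hS, _, hmS, T.min'_le⟩, fun V hV => ?_⟩
  obtain ⟨hV, m, hmV, hm⟩ := Finset.mem_filter.1 hV
  have hmin : m = T.min' hT := (hm _ (T.min'_mem hT)).antisymm (T.min'_le _ (π.le hV hmV))
  exact π.eq_of_mem_parts hV hS (hmin ▸ hmV) hmS

open Classical in
theorem eq_sum_finpartition_of_min_peeling {𝕜 : Type*} [CommSemiring 𝕜] {f : Finset ι → 𝕜}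
    {u : ℕ → Finset ι → 𝕜} {Q : Finset ι → Finset ι → Prop}
    {p : Finset ι → Finset (Finset ι) → Prop} [∀ T P, Decidable (p T P)]
    (u_zero : ∀ T, u 0 T = if T = ∅ then 1 else 0)
    (u_succ : ∀ k T, u (k + 1) T =
      ∑ S ∈ T.powerset with ContainsMin S T ∧ Q S T, f S * u k (T \ S))
    (p_empty : p ∅ ∅)
    (p_peel : ∀ (T : Finset ι) (π : Finpartition T), ∀ S ∈ π.parts, ContainsMin S T →
      (p T π.parts ↔ Q S T ∧ p (T \ S) (π.parts.erase S)))
    (k : ℕ) (T : Finset ι) :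
    u k T = ∑ π : Finpartition T with π.parts.card = k,
      if p T π.parts then ∏ V ∈ π.parts, f V else 0 := by
  rw [eq_sum_finpartition_of_peeling (N := fun T P => if p T P then 1 else 0)
    (fun S T h => h.1.nonempty) u_zero u_succ (by simp [p_empty]) fun T π hT => ?_]
  · simp
  · obtain ⟨S, hS, hmin, hfilter⟩ := exists_filter_containsMin_eq_singleton π hT
    rw [← Finset.filter_filter, hfilter, Finset.sum_filter, Finset.sum_singleton, ← ite_and]
    simp only [p_peel T π S hS hmin]

end MinPeeling

section HookProduct

variable {β : Type*}

open Classical in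
/-- The product over `V ∈ P` of the number of elements of `P` that `r` relates to `V`. For the
nesting order on the blocks of a noncrossing partition this is the forest factorial. -/
noncomputable def hookProduct (r : β → β → Prop) (P : Finset β) : ℕ :=
  ∏ V ∈ P, {W ∈ P | r W V}.card

/-- `S` is a root of `P` for the forest order `r`: it lies below no other element of `P`. -/
def IsRoot (r : β → β → Prop) (P : Finset β) (S : β) : Prop := ∀ V ∈ P, r S V → V = S

variable {r : β → β → Prop} {P : Finset β}

open Classical in
lemma card_mul_hookProduct_erase [DecidableEq β] {S : β} (hS : S ∈ P) (hroot : IsRoot r P S) :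
    {W ∈ P | r W S}.card * hookProduct r (P.erase S) = hookProduct r P := by
  rw [hookProduct, hookProduct, ← Finset.mul_prod_erase P _ hS]
  congr 1
  refine Finset.prod_congr rfl fun V hV => ?_
  obtain ⟨hVS, hV⟩ := Finset.mem_erase.1 hV
  rw [Finset.filter_erase, Finset.erase_eq_of_notMem]
  exact fun h => hVS (hroot V hV (Finset.mem_filter.1 h).2)

open Classical in
/-- The recursion of the hook length formula for forests: removing a root divides the hook product
by the size of its tree, and the trees partition the vertices. -/
theorem sum_inv_hookProduct_erase (𝕜 : Type*) [Field 𝕜] [CharZero 𝕜] [DecidableEq β]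
    (hr : ∀ V, r V V) (hroot : ∀ W ∈ P, ∃! S, S ∈ P ∧ IsRoot r P S ∧ r W S) :
    ∑ S ∈ P with IsRoot r P S, (hookProduct r (P.erase S) : 𝕜)⁻¹ =
      P.card * (hookProduct r P : 𝕜)⁻¹ := by
  have hcard : ∑ S ∈ P with IsRoot r P S, {W ∈ P | r W S}.card = P.card := by
    refine (Finset.sum_card_bipartiteAbove_eq_sum_card_bipartiteBelow r).symm.trans ?_
    rw [Finset.card_eq_sum_ones]
    refine Finset.sum_congr rfl fun W hW => Finset.card_eq_one.2 ?_
    obtain ⟨S, ⟨hS, hSroot, hWS⟩, huniq⟩ := hroot W hW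
    refine ⟨S, Finset.eq_singleton_iff_unique_mem.2 ?_⟩
    simp only [Finset.mem_bipartiteAbove, Finset.mem_filter]
    exact ⟨⟨⟨hS, hSroot⟩, hWS⟩, fun V hV => huniq V ⟨hV.1.1, hV.1.2, hV.2⟩⟩
  rw [← hcard, Nat.cast_sum, Finset.sum_mul]
  refine Finset.sum_congr rfl fun S hS => ?_
  obtain ⟨hS, hSroot⟩ := Finset.mem_filter.1 hS
  have hne : ({W ∈ P | r W S}.card : 𝕜) ≠ 0 :=
    Nat.cast_ne_zero.2 (Finset.card_ne_zero_of_mem (Finset.mem_filter.2 ⟨hS, hr S⟩))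
  rw [← card_mul_hookProduct_erase hS hSroot, Nat.cast_mul, mul_inv, mul_inv_cancel_left₀ hne]

end HookProduct

section Noncrossing

variable {n : ℕ} {S T V W : Finset (Fin n)}

/-- Every block of `P` lies in a run of `T` and the blocks of `P` are noncrossing: juxtaposing
noncrossing partitions of the runs of `T`. -/
def IsNoncrossingIn (T : Finset (Fin n)) (P : Finset (Finset (Fin n))) : Prop :=
  (∀ V ∈ P, InRun V T) ∧ ∀ a b c d : Fin n, a < b → b < c → c < d →
    ∀ V ∈ P, ∀ W ∈ P, a ∈ V → c ∈ V → b ∈ W → d ∈ W → V = W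

/-- The outer blocks of a noncrossing partition are the roots of its forest of nestings. -/
abbrev IsOuterBlock (P : Finset (Finset (Fin n))) (S : Finset (Fin n)) : Prop :=
  IsRoot NestedIn P S

lemma nestedIn_refl (V : Finset (Fin n)) : NestedIn V V :=
  fun v hv => ⟨⟨v, hv, le_rfl⟩, v, hv, le_rfl⟩

lemma NestedIn.trans {U : Finset (Fin n)} (hUV : NestedIn U V) (hVW : NestedIn V W) :
    NestedIn U W := by
  intro u hu
  obtain ⟨⟨a, ha, hau⟩, b, hb, hub⟩ := hUV u hu
  obtain ⟨⟨a', ha', haa'⟩, -⟩ := hVW a ha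
  obtain ⟨-, b', hb', hbb'⟩ := hVW b hb
  exact ⟨⟨a', ha', haa'.trans hau⟩, b', hb', hub.trans hbb'⟩

lemma NestedIn.min_le (h : NestedIn V W) : W.min ≤ V.min := by
  refine Finset.le_min fun v hv => ?_
  obtain ⟨⟨a, ha, hav⟩, -⟩ := h v hv
  exact (Finset.min_le ha).trans (WithTop.coe_le_coe.2 hav)

lemma eq_of_nestedIn_of_min_le (π : Finpartition T) (hV : V ∈ π.parts) (hW : W ∈ π.parts)
    (hVW : NestedIn V W) (hmin : V.min ≤ W.min) : V = W := by
  obtain ⟨m, hm⟩ := Finset.min_of_nonempty (π.nonempty_of_mem_parts hV)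
  exact π.eq_of_mem_parts hV hW (Finset.mem_of_min hm)
    (Finset.mem_of_min ((hVW.min_le.antisymm hmin).trans hm))

lemma exists_isOuterBlock_nestedIn (π : Finpartition T) (hW : W ∈ π.parts) :
    ∃ S ∈ π.parts, IsOuterBlock π.parts S ∧ NestedIn W S := by
  classical
  obtain ⟨S, hS, hmin⟩ := Finset.exists_min_image {V ∈ π.parts | NestedIn W V} Finset.min
    ⟨W, Finset.mem_filter.2 ⟨hW, nestedIn_refl W⟩⟩
  obtain ⟨hS, hWS⟩ := Finset.mem_filter.1 hS
  refine ⟨S, hS, fun V hV hSV => ?_, hWS⟩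
  exact (eq_of_nestedIn_of_min_le π hS hV hSV
    (hmin V (Finset.mem_filter.2 ⟨hV, hWS.trans hSV⟩))).symm

lemma IsNoncrossingIn.nestedIn_of_mem_Icc {π : Finpartition T} (h : IsNoncrossingIn T π.parts)
    (hV : V ∈ π.parts) (hW : W ∈ π.parts) {a b w : Fin n} (ha : a ∈ V) (hb : b ∈ V) (hw : w ∈ W)
    (haw : a ≤ w) (hwb : w ≤ b) : NestedIn W V := by
  obtain rfl | hVW := eq_or_ne V W
  · exact nestedIn_refl V
  have hne {x : Fin n} (hx : x ∈ V) : x ≠ w := fun hxw =>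
    hVW (π.eq_of_mem_parts hV hW hx (hxw ▸ hw))
  replace haw := haw.lt_of_ne (hne ha)
  replace hwb := hwb.lt_of_ne (hne hb).symm
  refine fun x hx => ⟨⟨a, ha, not_lt.1 fun hxa => ?_⟩, b, hb, not_lt.1 fun hbx => ?_⟩
  · exact hVW (h.2 x a w b hxa haw hwb W hW V hV hx hw ha hb).symm
  · exact hVW (h.2 a w b x haw hwb hbx V hV W hW ha hb hw hx)

lemma IsNoncrossingIn.nestedIn_or_nestedIn {π : Finpartition T} (h : IsNoncrossingIn T π.parts)
    (hV : V ∈ π.parts) (hW : W ∈ π.parts) {U : Finset (Fin n)} (hU : U.Nonempty)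
    (hUV : NestedIn U V) (hUW : NestedIn U W) : NestedIn V W ∨ NestedIn W V := by
  obtain ⟨u, hu⟩ := hU
  obtain ⟨⟨a, ha, hau⟩, b, hb, hub⟩ := hUV u hu
  obtain ⟨⟨a', ha', hau'⟩, b', hb', hub'⟩ := hUW u hu
  rcases le_total a' a with haa' | haa'
  · exact Or.inl (h.nestedIn_of_mem_Icc hW hV ha' hb' ha haa' (hau.trans hub'))
  · exact Or.inr (h.nestedIn_of_mem_Icc hV hW ha hb ha' haa' (hau'.trans hub))

lemma IsNoncrossingIn.existsUnique_isOuterBlock {π : Finpartition T}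
    (h : IsNoncrossingIn T π.parts) (hW : W ∈ π.parts) :
    ∃! S, S ∈ π.parts ∧ IsOuterBlock π.parts S ∧ NestedIn W S := by
  obtain ⟨S, hS, hSout, hWS⟩ := exists_isOuterBlock_nestedIn π hW
  refine ⟨S, ⟨hS, hSout, hWS⟩, fun V ⟨hV, hVout, hWV⟩ => ?_⟩
  rcases h.nestedIn_or_nestedIn hV hS (π.nonempty_of_mem_parts hW) hWV hWS with hVS | hSV
  · exact (hVout S hS hVS).symm
  · exact hSout V hV hSV

lemma IsNoncrossingIn.isOuterBlock_of_erase {π : Finpartition T} (hS : S ∈ π.parts)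
    (h : IsNoncrossingIn (T \ S) (π.parts.erase S)) : IsOuterBlock π.parts S := by
  intro V hV hSV
  by_contra hVS
  obtain ⟨s, hs⟩ := π.nonempty_of_mem_parts hS
  obtain ⟨⟨a, ha, has⟩, b, hb, hsb⟩ := hSV s hs
  exact (Finset.mem_sdiff.1
    (h.1 V (Finset.mem_erase.2 ⟨hVS, hV⟩) a ha b hb s has hsb)).2 hs

lemma IsNoncrossingIn.of_erase {π : Finpartition T} (hST : InRun S T)
    (h : IsNoncrossingIn (T \ S) (π.parts.erase S)) : IsNoncrossingIn T π.parts := by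
  have hmem {V : Finset (Fin n)} (hVS : V ≠ S) (hV : V ∈ π.parts) : V ∈ π.parts.erase S :=
    Finset.mem_erase.2 ⟨hVS, hV⟩
  have hgap {V : Finset (Fin n)} (hVS : V ≠ S) (hV : V ∈ π.parts) {x y z : Fin n} (hx : x ∈ V)
      (hy : y ∈ V) (hxz : x < z) (hzy : z < y) : z ∉ S :=
    (Finset.mem_sdiff.1 (h.1 V (hmem hVS hV) x hx y hy z hxz.le hzy.le)).2
  constructor
  · intro V hV
    obtain rfl | hVS := eq_or_ne V S
    · exact hST
    · exact (h.1 V (hmem hVS hV)).mono Finset.sdiff_subset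
  · intro a b c d hab hbc hcd V hV W hW haV hcV hbW hdW
    by_cases hVS : V = S <;> by_cases hWS : W = S
    · exact hVS.trans hWS.symm
    · exact absurd (hVS ▸ hcV) (hgap hWS hW hbW hdW hbc hcd)
    · exact absurd (hWS ▸ hbW) (hgap hVS hV haV hcV hab hbc)
    · exact h.2 a b c d hab hbc hcd V (hmem hVS hV) W (hmem hWS hW) haV hcV hbW hdW

lemma IsNoncrossingIn.erase {π : Finpartition T} (h : IsNoncrossingIn T π.parts)
    (hS : S ∈ π.parts) (hout : IsOuterBlock π.parts S) :
    IsNoncrossingIn (T \ S) (π.parts.erase S) := by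
  refine ⟨fun V hV x hx y hy z hxz hzy => ?_, fun a b c d hab hbc hcd V hV W hW =>
    h.2 a b c d hab hbc hcd V (Finset.mem_of_mem_erase hV) W (Finset.mem_of_mem_erase hW)⟩
  obtain ⟨hVS, hV⟩ := Finset.mem_erase.1 hV
  refine Finset.mem_sdiff.2 ⟨h.1 V hV x hx y hy z hxz hzy, fun hz => hVS ?_⟩
  exact hout V hV (h.nestedIn_of_mem_Icc hV hS hx hy hz hxz hzy)

theorem isNoncrossingIn_erase_iff (π : Finpartition T) (hS : S ∈ π.parts) :
    InRun S T ∧ IsNoncrossingIn (T \ S) (π.parts.erase S) ↔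
      IsOuterBlock π.parts S ∧ IsNoncrossingIn T π.parts :=
  ⟨fun h => ⟨h.2.isOuterBlock_of_erase hS, h.2.of_erase h.1⟩,
    fun h => ⟨h.2.1 S hS, h.2.erase hS h.1⟩⟩

lemma ContainsMin.isOuterBlock {π : Finpartition T} (h : ContainsMin S T) (hS : S ∈ π.parts) :
    IsOuterBlock π.parts S := by
  obtain ⟨m, hmS, hm⟩ := h
  intro V hV hSV
  obtain ⟨⟨a, ha, ham⟩, -⟩ := hSV m hmS
  exact π.eq_of_mem_parts hV hS (ham.antisymm (hm a (π.le hV ha)) ▸ ha) hmS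

end Noncrossing

section PeelingCount

variable {n : ℕ} {T : Finset (Fin n)}

open Classical in
/-- The number of orders in which the blocks of `P` can be removed from `T` one at a time, each
lying in a run of what is left. By the hook length formula for forests this is `|P|! / t(P)!` when
`P` is noncrossing. -/
noncomputable def peelingCount (T : Finset (Fin n)) (P : Finset (Finset (Fin n))) : ℂ :=
  if IsNoncrossingIn T P then P.card.factorial * (hookProduct NestedIn P : ℂ)⁻¹ else 0

lemma peelingCount_empty : peelingCount (∅ : Finset (Fin n)) ∅ = 1 := by
  simp [peelingCount, IsNoncrossingIn, hookProduct]

open Classical in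
theorem peelingCount_eq_sum_erase (π : Finpartition T) (hT : T.Nonempty) :
    peelingCount T π.parts =
      ∑ S ∈ π.parts with S.Nonempty ∧ InRun S T, peelingCount (T \ S) (π.parts.erase S) := by
  have hparts : 0 < π.parts.card := by
    obtain ⟨x, hx⟩ := hT
    obtain ⟨V, hV, -⟩ := π.exists_mem hx
    exact Finset.card_pos.2 ⟨V, hV⟩
  have herase : ∀ S ∈ π.parts,
      (if S.Nonempty ∧ InRun S T then peelingCount (T \ S) (π.parts.erase S) else 0) =
        if IsOuterBlock π.parts S ∧ IsNoncrossingIn T π.parts then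
          ((π.parts.card - 1).factorial : ℂ) * (hookProduct NestedIn (π.parts.erase S) : ℂ)⁻¹
        else 0 := by
    intro S hS
    simp only [← isNoncrossingIn_erase_iff π hS, π.nonempty_of_mem_parts hS, true_and,
      peelingCount, Finset.card_erase_of_mem hS, ite_and]
  rw [Finset.sum_filter, Finset.sum_congr rfl herase, peelingCount]
  split_ifs with hπ
  · have hhook := sum_inv_hookProduct_erase ℂ nestedIn_refl fun W hW =>
      hπ.existsUnique_isOuterBlock hW
    simp only [hπ, and_true]
    rw [← Finset.sum_filter, ← Finset.mul_sum, ← Nat.mul_factorial_pred hparts.ne', Nat.cast_mul,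
      mul_comm (π.parts.card : ℂ), mul_assoc, ← hhook]
  · simp [hπ]

end PeelingCount

section Powers

variable {A : Type*} {n : ℕ} {S T : Finset (Fin n)}

lemma inRun_map_valEmbedding :
    InRun (S.map Fin.valEmbedding) (T.map Fin.valEmbedding) ↔ InRun S T := by
  constructor
  · intro h x hx y hy z hxz hzy
    exact (Finset.mem_map' _).1
      (h x (Finset.mem_map_of_mem _ hx) y (Finset.mem_map_of_mem _ hy) z hxz hzy)
  · intro h x hx y hy z hxz hzy
    obtain ⟨i, hi, rfl⟩ := Finset.mem_map.1 hx
    obtain ⟨j, hj, rfl⟩ := Finset.mem_map.1 hy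
    exact Finset.mem_map_of_mem Fin.valEmbedding (h i hi j hj ⟨z, hzy.trans_lt j.2⟩ hxz hzy)

lemma containsMin_map_valEmbedding :
    ContainsMin (S.map Fin.valEmbedding) (T.map Fin.valEmbedding) ↔ ContainsMin S T := by
  simp [ContainsMin]

lemma epsW_sentenceAt (a : ℕ → A) (T : Finset ℕ) :
    epsW (sentenceAt a T) = if T = ∅ then 1 else 0 := by
  split_ifs with hT
  · rw [hT, sentenceAt_empty, epsW_nil]
  · exact epsW_of_ne_nil (sentenceAt_ne_nil a (Finset.nonempty_iff_ne_empty.2 hT))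

variable [Zero A] {α : Sentence A → ℂ}

open Classical in
theorem IsInfCharW.precPowW_sentenceAt (hα : IsInfCharW α) (a : ℕ → A) (k : ℕ)
    (T : Finset (Fin n)) :
    precPowW α k (sentenceAt a (T.map Fin.valEmbedding)) =
      ∑ π : Finpartition T with π.parts.card = k, if IsNoncrossingIn T π.parts then
        ∏ V ∈ π.parts, α (subwordAt a (V.map Fin.valEmbedding)) else 0 := by
  refine eq_sum_finpartition_of_min_peeling
    (u := fun k T => precPowW α k (sentenceAt a (T.map Fin.valEmbedding))) (Q := InRun)
    (p := IsNoncrossingIn) (fun T => ?_) (fun k T => ?_) (by simp [IsNoncrossingIn])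
    (fun T π S hS hmin => ?_) k T
  · simp [precPowW, epsW_sentenceAt]
  · rw [precPowW, hα.precW_sentenceAt, Finset.sum_filter, sum_powerset_map, Finset.sum_filter]
    simp only [containsMin_map_valEmbedding, inRun_map_valEmbedding, Finset.map_sdiff]
  · rw [isNoncrossingIn_erase_iff π hS]
    exact (and_iff_right (hmin.isOuterBlock hS)).symm

open Classical in
theorem IsInfCharW.succPowW_sentenceAt (hα : IsInfCharW α) (a : ℕ → A) (k : ℕ)
    (T : Finset (Fin n)) :
    succPowW α k (sentenceAt a (T.map Fin.valEmbedding)) =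
      ∑ π : Finpartition T with π.parts.card = k, if ∀ V ∈ π.parts, InRun V V then
        ∏ V ∈ π.parts, α (subwordAt a (V.map Fin.valEmbedding)) else 0 := by
  refine eq_sum_finpartition_of_min_peeling
    (u := fun k T => succPowW α k (sentenceAt a (T.map Fin.valEmbedding)))
    (Q := fun S _ => InRun S S) (p := fun _ P => ∀ V ∈ P, InRun V V)
    (fun T => ?_) (fun k T => ?_) (by simp) (fun T π S hS _ => ?_) k T
  · simp [succPowW, epsW_sentenceAt]
  · rw [succPowW, hα.succW_sentenceAt, Finset.sum_filter, sum_powerset_map, Finset.sum_filter]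
    simp only [containsMin_map_valEmbedding, inRun_map_valEmbedding, Finset.map_sdiff]
  · rw [← Finset.forall_mem_insert S (π.parts.erase S) fun V => InRun V V, Finset.insert_erase hS]

open Classical in
theorem IsInfCharW.convPowW_sentenceAt (hα : IsInfCharW α) (a : ℕ → A) (k : ℕ)
    (T : Finset (Fin n)) :
    convPowW α k (sentenceAt a (T.map Fin.valEmbedding)) =
      ∑ π : Finpartition T with π.parts.card = k,
        peelingCount T π.parts * ∏ V ∈ π.parts, α (subwordAt a (V.map Fin.valEmbedding)) := by
  refine eq_sum_finpartition_of_peeling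
    (u := fun k T => convPowW α k (sentenceAt a (T.map Fin.valEmbedding)))
    (R := fun S T => S.Nonempty ∧ InRun S T) (fun S T h => h.1)
    (fun T => ?_) (fun k T => ?_) peelingCount_empty (fun T => peelingCount_eq_sum_erase) k T
  · simp [convPowW, epsW_sentenceAt]
  · rw [convPowW, hα.convW_sentenceAt, Finset.sum_filter, sum_powerset_map, Finset.sum_filter]
    simp only [Finset.map_nonempty, inRun_map_valEmbedding, Finset.map_sdiff]

end Powers

section Exponentials

variable {A : Type*}

/-- The multilinear functionals `(a_1, …, a_n) ↦ α(a_1⋯a_n)` given by the values of `α` on words,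
as a family on lists. -/
noncomputable def wordFamily (α : Sentence A → ℂ) (l : List A) : ℂ := α (mkWords [l])

lemma wordFamily_word (α : Sentence A → ℂ) (w : WordNE A) : wordFamily α w.1 = α [w] := by
  rw [wordFamily, mkWords_singleton w.2]
  rfl

open Classical in
lemma finsum_mem_setOf_eq_sum_ite {ι M : Type*} [Fintype ι] [AddCommMonoid M] (p : ι → Prop)
    (f : ι → M) : ∑ᶠ i ∈ {i | p i}, f i = ∑ i, if p i then f i else 0 := by
  rw [finsum_mem_def, finsum_eq_sum_of_fintype]
  rfl

lemma isNoncrossingIn_univ_iff {n : ℕ} {π : NPart n} :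
    IsNoncrossingIn Finset.univ π.parts ↔ IsNoncrossing π :=
  and_iff_right fun _ _ _ _ _ _ _ _ _ => Finset.mem_univ _

lemma forall_inRun_self_iff {n : ℕ} {π : NPart n} :
    (∀ V ∈ π.parts, InRun V V) ↔ IsIntervalPart π :=
  Iff.rfl

lemma peelingCount_univ {n : ℕ} {π : NPart n} (hπ : IsNoncrossing π) :
    peelingCount Finset.univ π.parts = π.parts.card.factorial * (forestFactorial π : ℂ)⁻¹ :=
  if_pos (isNoncrossingIn_univ_iff.2 hπ)

variable [Zero A] {α : Sentence A → ℂ}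

lemma wordFamily_map_get_sort (α : Sentence A → ℂ) (w : WordNE A) (V : Finset (Fin w.1.length)) :
    wordFamily α ((V.sort (· ≤ ·)).map w.1.get) =
      α (subwordAt (fun i => w.1.getD i 0) (V.map Fin.valEmbedding)) :=
  congrArg (fun c : Sentence A × Sentence A => α c.1) (wordCut_eq w V)

lemma sentenceAt_map_univ (w : WordNE A) :
    sentenceAt (fun i => w.1.getD i 0)
      ((Finset.univ : Finset (Fin w.1.length)).map Fin.valEmbedding) = [w] := by
  rw [Fin.map_valEmbedding_univ, Nat.Iio_eq_range, Finset.range_eq_Ico, sentenceAt_getD]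

theorem IsInfCharW.ePrecW_word (hα : IsInfCharW α) (w : WordNE A) :
    ePrecW α [w] = ∑ᶠ π ∈ {π : NPart w.1.length | IsNoncrossing π},
      blockApply (wordFamily α) w.1.get π := by
  classical
  rw [ePrecW, ← sentenceAt_map_univ w]
  simp only [hα.precPowW_sentenceAt, finsum_sum_finpartition_card, isNoncrossingIn_univ_iff,
    finsum_mem_setOf_eq_sum_ite, blockApply, wordFamily_map_get_sort]

theorem IsInfCharW.eSuccW_word (hα : IsInfCharW α) (w : WordNE A) :
    eSuccW α [w] = ∑ᶠ π ∈ {π : NPart w.1.length | IsIntervalPart π},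
      blockApply (wordFamily α) w.1.get π := by
  classical
  rw [eSuccW, ← sentenceAt_map_univ w]
  simp only [hα.succPowW_sentenceAt, finsum_sum_finpartition_card, forall_inRun_self_iff,
    finsum_mem_setOf_eq_sum_ite, blockApply, wordFamily_map_get_sort]

theorem IsInfCharW.expStarW_word (hα : IsInfCharW α) (w : WordNE A) :
    expStarW α [w] = ∑ᶠ π ∈ {π : NPart w.1.length | IsNoncrossing π},
      (forestFactorial π : ℂ)⁻¹ * blockApply (wordFamily α) w.1.get π := by
  classical
  rw [expStarW, ← sentenceAt_map_univ w]
  simp only [hα.convPowW_sentenceAt, Finset.mul_sum]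
  rw [finsum_sum_finpartition_card fun k π => (k.factorial : ℂ)⁻¹ * _,
    finsum_mem_setOf_eq_sum_ite]
  refine Finset.sum_congr rfl fun π _ => ?_
  split_ifs with hπ
  · rw [peelingCount_univ hπ, mul_assoc, inv_mul_cancel_left₀
      (Nat.cast_ne_zero.2 (Nat.factorial_ne_zero _))]
    simp only [blockApply, wordFamily_map_get_sort]
  · rw [peelingCount, if_neg (mt isNoncrossingIn_univ_iff.1 hπ), zero_mul, mul_zero]

end Exponentials

section Uniqueness

variable {A : Type*}

lemma eq_indiscrete_of_mem_parts {ι : Type*} [DecidableEq ι] {T : Finset ι} (hT : T ≠ ⊥)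
    {π : Finpartition T} (hTπ : T ∈ π.parts) : π = Finpartition.indiscrete hT := by
  refine Finpartition.ext (Finset.eq_singleton_iff_unique_mem.2 ⟨hTπ, fun V hV => ?_⟩)
  obtain ⟨x, hx⟩ := π.nonempty_of_mem_parts hV
  exact π.eq_of_mem_parts hV hTπ hx (π.le hV hx)

lemma blockApply_indiscrete (f : List A → ℂ) {l : List A}
    (hl : (Finset.univ : Finset (Fin l.length)) ≠ ⊥) :
    blockApply f l.get (Finpartition.indiscrete hl) = f l := by
  rw [blockApply, Finpartition.indiscrete_parts, Finset.prod_singleton, Fin.sort_univ,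
    List.map_get_finRange]

lemma blockApply_congr_of_ne_indiscrete {f g : List A → ℂ} {n : ℕ}
    (hn : (Finset.univ : Finset (Fin n)) ≠ ⊥)
    (hfg : ∀ l : List A, l ≠ [] → l.length < n → f l = g l) (a : Fin n → A) {π : NPart n}
    (hπ : π ≠ Finpartition.indiscrete hn) : blockApply f a π = blockApply g a π := by
  refine Finset.prod_congr rfl fun V hV => hfg _ ?_ ?_
  · rw [← List.length_pos_iff_ne_nil, List.length_map, Finset.length_sort, Finset.card_pos]
    exact π.nonempty_of_mem_parts hV
  · have hVuniv : V ≠ Finset.univ := fun h => hπ (eq_indiscrete_of_mem_parts hn (h ▸ hV))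
    simpa using Finset.card_lt_card (Finset.ssubset_univ_iff.2 hVuniv)

theorem eq_of_sum_mul_blockApply_eq {f g : List A → ℂ} (c : ∀ n, NPart n → ℂ)
    (hc : ∀ n (hn : (Finset.univ : Finset (Fin n)) ≠ ⊥), c n (Finpartition.indiscrete hn) ≠ 0)
    (h : ∀ l : List A, l ≠ [] →
      ∑ π, c l.length π * blockApply f l.get π = ∑ π, c l.length π * blockApply g l.get π)
    {l : List A} (hl : l ≠ []) : f l = g l := by
  induction hlen : l.length using Nat.strong_induction_on generalizing l with
  | _ n ih =>
    subst hlen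
    have huniv : (Finset.univ : Finset (Fin l.length)) ≠ ⊥ :=
      Finset.Nonempty.ne_empty ⟨⟨0, List.length_pos_iff_ne_nil.2 hl⟩, Finset.mem_univ _⟩
    have hsum : ∑ π, c l.length π * (blockApply f l.get π - blockApply g l.get π) = 0 := by
      simp only [mul_sub, Finset.sum_sub_distrib, h l hl, sub_self]
    rw [Finset.sum_eq_single (Finpartition.indiscrete huniv) (fun π _ hπ => ?_) (by simp),
      blockApply_indiscrete, blockApply_indiscrete] at hsum
    · exact sub_eq_zero.1 ((mul_eq_zero.1 hsum).resolve_left (hc _ huniv))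
    · rw [blockApply_congr_of_ne_indiscrete huniv (fun l' hl' hlt => ih _ hlt hl' rfl) _ hπ,
        sub_self, mul_zero]

lemma isNoncrossing_indiscrete {n : ℕ} (hn : (Finset.univ : Finset (Fin n)) ≠ ⊥) :
    IsNoncrossing (Finpartition.indiscrete hn) :=
  fun _ _ _ _ _ _ _ _ hV _ hW _ _ _ _ =>
    (Finset.mem_singleton.1 hV).trans (Finset.mem_singleton.1 hW).symm

lemma isIntervalPart_indiscrete {n : ℕ} (hn : (Finset.univ : Finset (Fin n)) ≠ ⊥) :
    IsIntervalPart (Finpartition.indiscrete hn) :=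
  fun _ hV _ _ _ _ _ _ _ => Finset.mem_singleton.1 hV ▸ Finset.mem_univ _

lemma forestFactorial_ne_zero {n : ℕ} (π : NPart n) : forestFactorial π ≠ 0 := by
  classical
  exact Finset.prod_ne_zero_iff.2 fun V hV =>
    Finset.card_ne_zero_of_mem (Finset.mem_filter.2 ⟨hV, nestedIn_refl V⟩)

variable [Ring A] {φ : A → ℂ} {f g : List A → ℂ}

theorem FreeMC.unique (hf : FreeMC φ f) (hg : FreeMC φ g) {l : List A} (hl : l ≠ []) :
    f l = g l := by
  classical
  refine eq_of_sum_mul_blockApply_eq (fun _ π => if IsNoncrossing π then 1 else 0)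
    (fun n hn => by simp [isNoncrossing_indiscrete]) (fun l hl => ?_) hl
  have hlen := List.length_pos_iff_ne_nil.2 hl
  have h := (hf _ hlen l.get).symm.trans (hg _ hlen l.get)
  simpa only [finsum_mem_setOf_eq_sum_ite, ite_mul, one_mul, zero_mul] using h

theorem BooleanMC.unique (hf : BooleanMC φ f) (hg : BooleanMC φ g) {l : List A} (hl : l ≠ []) :
    f l = g l := by
  classical
  refine eq_of_sum_mul_blockApply_eq (fun _ π => if IsIntervalPart π then 1 else 0)
    (fun n hn => by simp [isIntervalPart_indiscrete]) (fun l hl => ?_) hl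
  have hlen := List.length_pos_iff_ne_nil.2 hl
  have h := (hf _ hlen l.get).symm.trans (hg _ hlen l.get)
  simpa only [finsum_mem_setOf_eq_sum_ite, ite_mul, one_mul, zero_mul] using h

theorem MonotoneMC.unique (hf : MonotoneMC φ f) (hg : MonotoneMC φ g) {l : List A} (hl : l ≠ []) :
    f l = g l := by
  classical
  refine eq_of_sum_mul_blockApply_eq
    (fun _ π => if IsNoncrossing π then (forestFactorial π : ℂ)⁻¹ else 0)
    (fun n hn => by simp [isNoncrossing_indiscrete, forestFactorial_ne_zero]) (fun l hl => ?_) hl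
  have hlen := List.length_pos_iff_ne_nil.2 hl
  have h := (hf _ hlen l.get).symm.trans (hg _ hlen l.get)
  simpa only [finsum_mem_setOf_eq_sum_ite, ite_mul, zero_mul] using h

end Uniqueness

section Cumulants

variable {A : Type*}

lemma forall_tuple_of_forall_word {p : ∀ n, (Fin n → A) → Prop}
    (h : ∀ w : WordNE A, p w.1.length w.1.get) (n : ℕ) (hn : 1 ≤ n) (a : Fin n → A) : p n a := by
  obtain ⟨l, hl⟩ := List.equivSigmaTuple.surjective ⟨n, a⟩
  cases hl
  exact h ⟨l, List.length_pos_iff_ne_nil.1 hn⟩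

variable [Ring A] {φ : A → ℂ} {α : Sentence A → ℂ}

lemma charW_word (φ : A → ℂ) (w : WordNE A) :
    charW φ [w] = φ (List.ofFn w.1.get).prod := by
  rw [List.ofFn_get]
  exact mul_one _

theorem IsInfCharW.freeMC_wordFamily (hα : IsInfCharW α) (h : charW φ = ePrecW α) :
    FreeMC φ (wordFamily α) :=
  forall_tuple_of_forall_word fun w =>
    ((charW_word φ w).symm.trans (congrFun h [w])).trans (hα.ePrecW_word w)

theorem IsInfCharW.booleanMC_wordFamily (hα : IsInfCharW α) (h : charW φ = eSuccW α) :
    BooleanMC φ (wordFamily α) :=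
  forall_tuple_of_forall_word fun w =>
    ((charW_word φ w).symm.trans (congrFun h [w])).trans (hα.eSuccW_word w)

theorem IsInfCharW.monotoneMC_wordFamily (hα : IsInfCharW α) (h : charW φ = expStarW α) :
    MonotoneMC φ (wordFamily α) :=
  forall_tuple_of_forall_word fun w =>
    ((charW_word φ w).symm.trans (congrFun h [w])).trans (hα.expStarW_word w)

end Cumulants

theorem cumulant_triple_values_on_words_general {A : Type*} [Ring A] {φ : A → ℂ}
    {r b h : List A → ℂ} (hr : FreeMC φ r) (hb : BooleanMC φ b) (hh : MonotoneMC φ h)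
    {κ β ρ : Sentence A → ℂ} (hκ : IsInfCharW κ) (hβ : IsInfCharW β) (hρ : IsInfCharW ρ)
    (heκ : charW φ = ePrecW κ) (heβ : charW φ = eSuccW β) (heρ : charW φ = expStarW ρ)
    (w : WordNE A) : κ [w] = r w.1 ∧ β [w] = b w.1 ∧ ρ [w] = h w.1 := by
  simp only [← wordFamily_word]
  exact ⟨(hκ.freeMC_wordFamily heκ).unique hr w.2, (hβ.booleanMC_wordFamily heβ).unique hb w.2,
    (hρ.monotoneMC_wordFamily heρ).unique hh w.2⟩

/-- Let `(A, φ)` be a noncommutative probability space and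
`Φ : T(T_+(A)) → ℂ` the character extending `φ`. If `(κ, β, ρ)` is the (unique) triple of
infinitesimal characters with `Φ = exp^*(ρ) = E_≺(κ) = E_≻(β)`, then for every word
`w = a_1⋯a_n ∈ T_+(A)`: `κ(w) = r_n(a_1,…,a_n)`, `β(w) = b_n(a_1,…,a_n)` and
`ρ(w) = h_n(a_1,…,a_n)`, the free, Boolean and monotone cumulants of `(A, φ)`. -/
theorem cumulant_triple_values_on_words
    (A : Type*) [Ring A] [Algebra ℂ A] (φ : A →ₗ[ℂ] ℂ) (hφ : φ 1 = 1)
    (r b h : List A → ℂ)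
    (hr : FreeMC (fun x => φ x) r) (hb : BooleanMC (fun x => φ x) b)
    (hh : MonotoneMC (fun x => φ x) h)
    (κ β ρ : Sentence A → ℂ)
    (hκ : IsInfCharW κ) (hβ : IsInfCharW β) (hρ : IsInfCharW ρ)
    (heκ : charW (fun x => φ x) = ePrecW κ)
    (heβ : charW (fun x => φ x) = eSuccW β)
    (heρ : charW (fun x => φ x) = expStarW ρ) :
    ∀ w : WordNE A, κ [w] = r w.1 ∧ β [w] = b w.1 ∧ ρ [w] = h w.1 :=
  cumulant_triple_values_on_words_general hr hb hh hκ hβ hρ heκ heβ heρ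
end

section
/- Let (A, φ) be a noncommutative probability space with free cumulants {r_n}. Then for every n ≥ 1 and all a_1,…,a_n ∈ A, r_n(a_1,…,a_n) = Σ_{t ∈ PST(n)} (−1)^{i(t)−1} φ_{π(t)}(a_1,…,a_n), where PST(n) is the set of Schröder trees with n+1 leaves whose leftmost child of the root is a leaf. -/
open scoped BigOperators

/-! Strip the letters of a word one at a time: on noncommutative power series the moment-cumulant
relation becomes `M = subst M κ`, where `subst G` is the substitution `x ↦ x * G`, because the block
of the first letter cuts the rest of the word into independently partitioned subwords. Let `T` be
the sum over all Schröder trees weighted by `-M` at each internal vertex. A tree whose leftmost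
child is a leaf is a chain of trees strung along the root, so the sum over those trees, with weight
`M` at the root, is `subst T M`. Splitting off the leftmost child of the root gives
`T * subst T M = 1`. Substitutions compose by `subst T ∘ subst M = subst (T * subst T M)`, hence
`subst T` inverts `subst M` and `κ = subst T M`. -/

/-! ### Noncommutative formal power series -/

/-- Noncommutative formal power series over `R` in the letters `A`, encoded by their coefficient
functions: a series `F` is applied to a word `w` to give the coefficient `F w`. -/
structure WordSeries (R A : Type*) where
  coeff : List A → R

namespace WordSeries

variable {R A : Type*}

instance : FunLike (WordSeries R A) (List A) R where
  coe := coeff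
  coe_injective _ _ h := congrArg mk h

@[simp] lemma mk_apply (f : List A → R) (w : List A) : (⟨f⟩ : WordSeries R A) w = f w := rfl

/-- The left derivative (left quotient) of a series by a letter: it strips a leading `x`. -/
def leftDeriv (x : A) (F : WordSeries R A) : WordSeries R A := ⟨fun w => F (x :: w)⟩

@[simp] lemma leftDeriv_apply (x : A) (F : WordSeries R A) (w : List A) :
    leftDeriv x F w = F (x :: w) := rfl

lemma ext_leftDeriv {F G : WordSeries R A} (hnil : F [] = G [])
    (hcons : ∀ x, leftDeriv x F = leftDeriv x G) : F = G :=
  DFunLike.ext _ _ fun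
    | [] => hnil
    | x :: w => DFunLike.congr_fun (hcons x) w

variable [CommRing R]

instance : Zero (WordSeries R A) := ⟨⟨0⟩⟩

instance : One (WordSeries R A) := ⟨⟨fun w => if w = [] then 1 else 0⟩⟩

instance : Add (WordSeries R A) := ⟨fun F G => ⟨F + G⟩⟩

instance : Neg (WordSeries R A) := ⟨fun F => ⟨-F⟩⟩

instance : SMul R (WordSeries R A) := ⟨fun c F => ⟨c • F⟩⟩

instance : Mul (WordSeries R A) :=
  ⟨fun F G => ⟨fun w => ∑ i ∈ Finset.range (w.length + 1), F (w.take i) * G (w.drop i)⟩⟩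

section Coefficients

variable (F G : WordSeries R A) (x : A) (w : List A)

@[simp] lemma zero_apply : (0 : WordSeries R A) w = 0 := rfl

@[simp] lemma add_apply : (F + G) w = F w + G w := rfl

@[simp] lemma neg_apply : (-F) w = -F w := rfl

@[simp] lemma smul_apply (c : R) : (c • F) w = c * F w := rfl

@[simp] lemma one_nil : (1 : WordSeries R A) [] = 1 := rfl

@[simp] lemma one_cons : (1 : WordSeries R A) (x :: w) = 0 := rfl

lemma mul_apply :
    (F * G) w = ∑ i ∈ Finset.range (w.length + 1), F (w.take i) * G (w.drop i) := rfl

@[simp] lemma mul_nil : (F * G) [] = F [] * G [] := by simp [mul_apply]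

lemma mul_cons : (F * G) (x :: w) = F [] * G (x :: w) + (leftDeriv x F * G) w := by
  simp only [mul_apply, List.length_cons]
  rw [Finset.sum_range_succ']
  simp [add_comm]

variable {F G w} in
lemma mul_apply_congr {F' G' : WordSeries R A} (hF : ∀ u, u.length ≤ w.length → F u = F' u)
    (hG : ∀ u, u.length ≤ w.length → G u = G' u) : (F * G) w = (F' * G') w := by
  rw [mul_apply, mul_apply]
  exact Finset.sum_congr rfl fun i _ => by rw [hF _ (by simp), hG _ (by simp)]

end Coefficients

instance : AddCommGroup (WordSeries R A) where
  add_assoc _ _ _ := DFunLike.ext _ _ fun _ => add_assoc _ _ _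
  zero_add _ := DFunLike.ext _ _ fun _ => zero_add _
  add_zero _ := DFunLike.ext _ _ fun _ => add_zero _
  add_comm _ _ := DFunLike.ext _ _ fun _ => add_comm _ _
  neg_add_cancel _ := DFunLike.ext _ _ fun _ => neg_add_cancel _
  nsmul := nsmulRec
  zsmul := zsmulRec

instance : Module R (WordSeries R A) where
  one_smul _ := DFunLike.ext _ _ fun _ => one_mul _
  mul_smul _ _ _ := DFunLike.ext _ _ fun _ => mul_assoc _ _ _
  smul_zero _ := DFunLike.ext _ _ fun _ => mul_zero _
  smul_add _ _ _ := DFunLike.ext _ _ fun _ => mul_add _ _ _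
  add_smul _ _ _ := DFunLike.ext _ _ fun _ => add_mul _ _ _
  zero_smul _ := DFunLike.ext _ _ fun _ => zero_mul _

instance : NonUnitalNonAssocRing (WordSeries R A) where
  __ := (inferInstance : AddCommGroup (WordSeries R A))
  zero_mul _ := DFunLike.ext _ _ fun _ => by simp [mul_apply]
  mul_zero _ := DFunLike.ext _ _ fun _ => by simp [mul_apply]
  left_distrib _ _ _ := DFunLike.ext _ _ fun _ => by
    simp [mul_apply, mul_add, Finset.sum_add_distrib]
  right_distrib _ _ _ := DFunLike.ext _ _ fun _ => by
    simp [mul_apply, add_mul, Finset.sum_add_distrib]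

instance : IsScalarTower R (WordSeries R A) (WordSeries R A) where
  smul_assoc _ _ _ := DFunLike.ext _ _ fun _ => by
    simp [mul_apply, Finset.mul_sum, mul_assoc]

instance : SMulCommClass R (WordSeries R A) (WordSeries R A) where
  smul_comm _ _ _ := DFunLike.ext _ _ fun _ => by
    simp [mul_apply, Finset.mul_sum, mul_left_comm]

section LeftDeriv

variable (F G : WordSeries R A) (x : A)

@[simp] lemma leftDeriv_one : leftDeriv x (1 : WordSeries R A) = 0 := rfl

@[simp] lemma leftDeriv_neg : leftDeriv x (-F) = -leftDeriv x F := rfl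

@[simp] lemma leftDeriv_add : leftDeriv x (F + G) = leftDeriv x F + leftDeriv x G := rfl

@[simp] lemma leftDeriv_smul (c : R) : leftDeriv x (c • F) = c • leftDeriv x F := rfl

lemma leftDeriv_mul : leftDeriv x (F * G) = F [] • leftDeriv x G + leftDeriv x F * G :=
  DFunLike.ext _ _ (mul_cons F G x)

end LeftDeriv

instance : Ring (WordSeries R A) where
  __ := (inferInstance : NonUnitalNonAssocRing (WordSeries R A))
  one_mul F := ext_leftDeriv (by simp) fun x => by simp [leftDeriv_mul]
  mul_one F := DFunLike.ext _ _ fun w => by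
    induction w generalizing F with
    | nil => simp
    | cons x w ih => simp [mul_cons, ih]
  mul_assoc F G H := DFunLike.ext _ _ fun w => by
    induction w generalizing F G with
    | nil => simp [mul_assoc]
    | cons x w ih =>
      simp only [mul_cons _ _ x, leftDeriv_mul, add_mul, add_apply, smul_mul_assoc, smul_apply, ih,
        mul_nil]
      ring

/-! ### The substitution `x ↦ x * G` -/

/-- The image of a series `F` under the substitution `x ↦ x * G` of every letter `x`. It is
computed by stripping the first letter, see `leftDeriv_subst`. -/
def subst (G F : WordSeries R A) : WordSeries R A := ⟨go F⟩
where
  go (F : WordSeries R A) : List A → R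
    | [] => F []
    | x :: w => ∑ i : Fin (w.length + 1), G (w.take i) * go (leftDeriv x F) (w.drop i)
  termination_by w => w.length
  decreasing_by simp

section Subst

variable (F G H : WordSeries R A) (x : A)

@[simp] lemma subst_nil : subst G F [] = F [] := by
  simp [subst, subst.go]

lemma leftDeriv_subst : leftDeriv x (subst G F) = G * subst G (leftDeriv x F) :=
  DFunLike.ext _ _ fun w => by
    simp [subst, mul_apply, subst.go, Fin.sum_univ_eq_sum_range
      (fun i => G (w.take i) * subst.go G (leftDeriv x F) (w.drop i))]

variable {G} in
lemma subst_eq_of_leftDeriv {Φ : WordSeries R A → WordSeries R A} (hnil : ∀ F, Φ F [] = F [])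
    (hcons : ∀ F x, leftDeriv x (Φ F) = G * Φ (leftDeriv x F)) : subst G F = Φ F := by
  suffices h : ∀ n F w, w.length ≤ n → subst G F w = Φ F w from
    DFunLike.ext _ _ fun w => h _ F w le_rfl
  intro n
  induction n with
  | zero => simp +contextual [hnil]
  | succ n ih =>
    rintro F (- | ⟨x, w⟩) hw
    · simp [hnil]
    have hw : w.length ≤ n := by simpa using hw
    rw [← leftDeriv_apply, ← leftDeriv_apply, hcons, leftDeriv_subst]
    exact mul_apply_congr (fun _ _ => rfl) fun u hu => ih _ _ (hu.trans hw)

lemma subst_one : subst 1 F = F :=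
  subst_eq_of_leftDeriv (Φ := id) F (fun _ => rfl) fun _ _ => (one_mul _).symm

lemma subst_neg : subst G (-F) = -subst G F := by
  rw [subst_eq_of_leftDeriv (Φ := fun F => -subst G (-F)) F (by simp)
    fun F x => by simp [leftDeriv_subst], neg_neg]

lemma subst_add_smul (c : R) : subst G (c • F + H) = c • subst G F + subst G H := by
  suffices h : ∀ n w, w.length ≤ n → ∀ F H,
      subst G (c • F + H) w = (c • subst G F + subst G H) w from
    DFunLike.ext _ _ fun w => h _ w le_rfl F H
  intro n
  induction n with
  | zero => simp +contextual
  | succ n ih =>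
    rintro (- | ⟨x, w⟩) hw F H
    · simp
    have hw : w.length ≤ n := by simpa using hw
    rw [← leftDeriv_apply, ← leftDeriv_apply, leftDeriv_subst]
    simp only [leftDeriv_add, leftDeriv_smul, leftDeriv_subst]
    rw [← mul_smul_comm, ← mul_add]
    exact mul_apply_congr (fun _ _ => rfl) fun u hu => ih _ (hu.trans hw) _ _

lemma subst_mul : subst G (F * H) = subst G F * subst G H := by
  suffices h : ∀ n w, w.length ≤ n → ∀ F, subst G (F * H) w = (subst G F * subst G H) w from
    DFunLike.ext _ _ fun w => h _ w le_rfl F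
  intro n
  induction n with
  | zero => simp +contextual
  | succ n ih =>
    rintro (- | ⟨x, w⟩) hw F
    · simp
    have hw : w.length ≤ n := by simpa using hw
    rw [← leftDeriv_apply, ← leftDeriv_apply, leftDeriv_subst, leftDeriv_mul, leftDeriv_mul,
      leftDeriv_subst, leftDeriv_subst, subst_nil, subst_add_smul, mul_add, mul_smul_comm,
      mul_assoc]
    simp only [add_apply]
    exact congrArg _ (mul_apply_congr (fun _ _ => rfl) fun u hu => ih _ (hu.trans hw) _)

lemma subst_subst : subst H (subst G F) = subst (H * subst H G) F :=
  (subst_eq_of_leftDeriv (Φ := fun F => subst H (subst G F)) F (by simp) fun F x => by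
    rw [leftDeriv_subst, leftDeriv_subst, subst_mul, mul_assoc]).symm

end Subst

end WordSeries

/-! ### Noncrossing partitions and the word series of moments -/

section NoncrossingPartitions

variable {ι : Type*} [LinearOrder ι]

/-- `P` is the set of blocks of a noncrossing partition of the finite set `S`. -/
structure IsNCPartition (S : Finset ι) (P : Finset (Finset ι)) : Prop where
  nonempty {V} (hV : V ∈ P) : V.Nonempty
  mem_iff (x : ι) : x ∈ S ↔ ∃ V ∈ P, x ∈ V
  eq_of_mem {V W x} (hV : V ∈ P) (hW : W ∈ P) (hxV : x ∈ V) (hxW : x ∈ W) : V = W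
  noncrossing {V W a b c d} (hV : V ∈ P) (hW : W ∈ P) (ha : a ∈ V) (hb : b ∈ W) (hc : c ∈ V)
    (hd : d ∈ W) (hab : a < b) (hbc : b < c) (hcd : c < d) : V = W

/-- `B` and the blocks in `P` form a noncrossing partition of `S` in which `B` is the block of the
least element. For `S = ∅` this forces `B = ∅`, which is why `B` is kept apart from `P`. -/
structure IsRootedNCPartition (S B : Finset ι) (P : Finset (Finset ι)) : Prop where
  subset : B ⊆ S
  isNCPartition : IsNCPartition (S \ B) P
  exists_le {x} (hx : x ∈ S) : ∃ b ∈ B, b ≤ x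
  not_separates {V x y b} (hV : V ∈ P) (hx : x ∈ V) (hy : y ∈ V) (hb : b ∈ B) (hxb : x < b) :
    y ≤ b

/-- `U` is an initial segment of `T`. -/
def IsCut (T U : Finset ι) : Prop := U ⊆ T ∧ ∀ x ∈ U, ∀ y ∈ T \ U, x < y

lemma IsNCPartition.subset {S V : Finset ι} {P : Finset (Finset ι)} (h : IsNCPartition S P)
    (hV : V ∈ P) : V ⊆ S :=
  fun x hx => (h.mem_iff x).2 ⟨V, hV, hx⟩

lemma isNCPartition_empty_iff {P : Finset (Finset ι)} :
    IsNCPartition (∅ : Finset ι) P ↔ P = ∅ := by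
  constructor
  · exact fun h => Finset.eq_empty_of_forall_notMem fun V hV =>
      (h.nonempty hV).ne_empty (Finset.subset_empty.1 (h.subset hV))
  · rintro rfl
    exact ⟨by simp, by simp, by simp, by simp⟩

lemma IsNCPartition.not_subset {S U V : Finset ι} {P : Finset (Finset ι)}
    (h : IsNCPartition S P) (hSU : Disjoint S U) (hV : V ∈ P) : ¬V ⊆ U := by
  obtain ⟨x, hx⟩ := h.nonempty hV
  exact fun hVU => Finset.disjoint_left.1 hSU (h.subset hV hx) (hVU hx)

section Glue

variable {s : ι} {T U B C : Finset ι} {P Q : Finset (Finset ι)}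

lemma IsCut.isRootedNCPartition_insert (hs : ∀ x ∈ T, s < x) (hU : IsCut T U)
    (hP : IsNCPartition U P) (hQ : IsRootedNCPartition (T \ U) B Q) :
    IsRootedNCPartition (insert s T) (insert s B) (P ∪ Q) := by
  have hBT := hQ.subset
  have hUT := hU.1
  have hPU : ∀ V ∈ P, V ⊆ U := fun V => hP.subset
  have hQT : ∀ V ∈ Q, V ⊆ (T \ U) \ B := fun V => hQ.isNCPartition.subset
  have hlt : ∀ V ∈ P, ∀ x ∈ V, ∀ W ∈ Q, ∀ y ∈ W, x < y := fun V hV x hx W hW y hy =>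
    hU.2 x (hPU V hV hx) y (Finset.mem_sdiff.1 (hQT W hW hy)).1
  refine ⟨?_, ⟨?_, ?_, ?_, ?_⟩, ?_, ?_⟩
  · grind
  · grind [hP.nonempty, hQ.isNCPartition.nonempty]
  · intro x
    have := hP.mem_iff x
    have := hQ.isNCPartition.mem_iff x
    grind
  · grind [hP.eq_of_mem, hQ.isNCPartition.eq_of_mem]
  · grind [hP.noncrossing, hQ.isNCPartition.noncrossing]
  · exact fun {x} hx => ⟨s, Finset.mem_insert_self s B, by grind⟩
  · grind [hQ.not_separates, IsCut]

/-- The elements of `T` smaller than every element of `B`. -/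
def allBelow (T B : Finset ι) : Finset ι := T.filter fun x => ∀ b ∈ B, x < b

lemma mem_allBelow {x : ι} : x ∈ allBelow T B ↔ x ∈ T ∧ ∀ b ∈ B, x < b := Finset.mem_filter

lemma isCut_allBelow (T B : Finset ι) : IsCut T (allBelow T B) := by
  refine ⟨Finset.filter_subset _ _, fun x hx y hy => ?_⟩
  simp only [Finset.mem_sdiff, mem_allBelow, not_and, not_forall, not_lt] at hx hy
  obtain ⟨b, hb, hby⟩ := hy.2 hy.1
  exact (hx.2 b hb).trans_le hby

lemma IsCut.allBelow_eq (hU : IsCut T U) (hQ : IsRootedNCPartition (T \ U) B Q) :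
    allBelow T B = U := by
  ext x
  have hBT := hQ.subset
  have := @hQ.exists_le x
  have := hU.2 x
  have := @hU.1 x
  rw [mem_allBelow]
  grind

namespace IsRootedNCPartition

lemma subset_allBelow (h : IsRootedNCPartition (insert s T) (insert s B) P)
    {V : Finset ι} (hV : V ∈ P) {x : ι} (hxV : x ∈ V)
    (hx : x ∈ allBelow T B) : V ⊆ allBelow T B := by
  intro y hy
  have hyT := h.isNCPartition.subset hV hy
  have hyB : ∀ b ∈ B, x < b → y ≤ b := fun b hb =>
    h.not_separates hV hxV hy (Finset.mem_insert_of_mem hb)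
  rw [mem_allBelow] at hx ⊢
  grind

lemma isNCPartition_allBelow (h : IsRootedNCPartition (insert s T) (insert s B) P)
    (hsT : s ∉ T) : IsNCPartition (allBelow T B) (P.filter (· ⊆ allBelow T B)) := by
  have hP := h.isNCPartition
  have hsub := @h.subset_allBelow
  refine ⟨?_, fun x => ?_, ?_, ?_⟩
  · grind [hP.nonempty]
  · have := hP.mem_iff x
    have := @mem_allBelow _ _ T B x
    grind
  · grind [hP.eq_of_mem]
  · grind [hP.noncrossing]

lemma sdiff_allBelow (h : IsRootedNCPartition (insert s T) (insert s B) P)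
    (hsT : s ∉ T) (hsB : s ∉ B) :
    IsRootedNCPartition (T \ allBelow T B) B (P.filter (¬ · ⊆ allBelow T B)) := by
  have hP := h.isNCPartition
  have hsub := @h.subset_allBelow
  have hBT : ∀ b ∈ B, b ∈ T := fun b hb => by
    have := h.subset (Finset.mem_insert_of_mem hb)
    grind
  have hBU : ∀ b ∈ B, b ∉ allBelow T B := fun b hb hbU => ((mem_allBelow.1 hbU).2 b hb).false
  refine ⟨by grind, ⟨?_, fun x => ?_, ?_, ?_⟩, ?_, ?_⟩
  · grind [hP.nonempty]
  · have := hP.mem_iff x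
    grind
  · grind [hP.eq_of_mem]
  · grind [hP.noncrossing]
  · simp only [Finset.mem_sdiff, mem_allBelow]
    grind
  · grind [h.not_separates]

lemma not_subset (hQ : IsRootedNCPartition (T \ U) B Q) {V : Finset ι} (hV : V ∈ Q) : ¬V ⊆ U :=
  hQ.isNCPartition.not_subset (Finset.sdiff_disjoint.mono_left Finset.sdiff_subset) hV

lemma filter_subset_eq (hQ : IsRootedNCPartition (T \ U) B Q) (hP : IsNCPartition U P) :
    (P ∪ Q).filter (· ⊆ U) = P := by
  have hPU : ∀ V ∈ P, V ⊆ U := fun V => hP.subset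
  have hQU : ∀ V ∈ Q, ¬V ⊆ U := fun V => hQ.not_subset
  grind

lemma filter_not_subset_eq (hQ : IsRootedNCPartition (T \ U) B Q) (hP : IsNCPartition U P) :
    (P ∪ Q).filter (¬ · ⊆ U) = Q := by
  have hPU : ∀ V ∈ P, V ⊆ U := fun V => hP.subset
  have hQU : ∀ V ∈ Q, ¬V ⊆ U := fun V => hQ.not_subset
  grind

lemma disjoint (hQ : IsRootedNCPartition (T \ U) B Q) (hP : IsNCPartition U P) :
    Disjoint P Q :=
  Finset.disjoint_left.2 fun _ hVP hVQ => hQ.not_subset hVQ (hP.subset hVP)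

end IsRootedNCPartition
end Glue
end NoncrossingPartitions

section NoncrossingSums

variable {ι : Type*} [LinearOrder ι]

open Classical in
/-- The noncrossing partitions of `S`, as sets of blocks. -/
noncomputable def ncPartitions (S : Finset ι) : Finset (Finset (Finset ι)) :=
  S.powerset.powerset.filter (IsNCPartition S)

open Classical in
/-- The noncrossing partitions of `S`, as pairs of the block of the least element and the set of
the other blocks. -/
noncomputable def rootedNCPartitions (S : Finset ι) : Finset (Finset ι × Finset (Finset ι)) :=
  (S.powerset ×ˢ S.powerset.powerset).filter fun p => IsRootedNCPartition S p.1 p.2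

open Classical in
/-- The initial segments of `T`. -/
noncomputable def cuts (T : Finset ι) : Finset (Finset ι) := T.powerset.filter (IsCut T)

@[simp] lemma mem_ncPartitions {S : Finset ι} {P : Finset (Finset ι)} :
    P ∈ ncPartitions S ↔ IsNCPartition S P := by
  classical
  rw [ncPartitions, Finset.mem_filter, and_iff_right_iff_imp, Finset.mem_powerset]
  exact fun h V hV => Finset.mem_powerset.2 (h.subset hV)

@[simp] lemma mem_rootedNCPartitions {S B : Finset ι} {P : Finset (Finset ι)} :
    (B, P) ∈ rootedNCPartitions S ↔ IsRootedNCPartition S B P := by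
  classical
  rw [rootedNCPartitions, Finset.mem_filter, and_iff_right_iff_imp, Finset.mem_product,
    Finset.mem_powerset, Finset.mem_powerset]
  exact fun h => ⟨h.subset, fun V hV => Finset.mem_powerset.2
    ((h.isNCPartition.subset hV).trans Finset.sdiff_subset)⟩

@[simp] lemma mem_cuts {T U : Finset ι} : U ∈ cuts T ↔ IsCut T U := by
  classical
  rw [cuts, Finset.mem_filter, and_iff_right_iff_imp, Finset.mem_powerset]
  exact fun h => h.1

variable {A : Type*} (a : ι → A)

/-- The subword of `a` on the positions in `V`, in increasing order. -/
def subword (V : Finset ι) : List A := (V.sort (· ≤ ·)).map a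

lemma subword_empty : subword a ∅ = [] := by simp [subword]

lemma subword_insert {s : ι} {T : Finset ι} (hs : ∀ x ∈ T, s < x) :
    subword a (insert s T) = a s :: subword a T := by
  rw [subword, Finset.sort_insert _ (fun x hx => (hs x hx).le) fun h => (hs s h).false]
  rfl

lemma length_subword (V : Finset ι) : (subword a V).length = V.card := by simp [subword]

variable {R : Type*} [CommRing R] (F G κ : WordSeries R A)

/-- The sum over the noncrossing partitions of `S` of the product over the blocks of the
coefficients of `κ`. -/
noncomputable def ncSum (S : Finset ι) : R :=
  ∑ P ∈ ncPartitions S, ∏ V ∈ P, κ (subword a V)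

/-- The variant of `ncSum` in which the block of the least element is weighted by `F`. -/
noncomputable def rootedNCSum (S : Finset ι) : R :=
  ∑ p ∈ rootedNCPartitions S, F (subword a p.1) * ∏ V ∈ p.2, κ (subword a V)

lemma IsRootedNCPartition.mem_of_forall_lt {s : ι} {T C : Finset ι} {P : Finset (Finset ι)}
    (h : IsRootedNCPartition (insert s T) C P) (hs : ∀ x ∈ T, s < x) : s ∈ C := by
  obtain ⟨b, hbC, hbs⟩ := h.exists_le (Finset.mem_insert_self s T)
  have hb := h.subset hbC
  grind

-- The cut `U` consists of the positions before the second element of the block of `s`. By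
-- noncrossingness no other block meets both `U` and `T \ U`.
lemma rootedNCSum_insert {s : ι} {T : Finset ι} (hs : ∀ x ∈ T, s < x) :
    rootedNCSum a F κ (insert s T) = ∑ U ∈ cuts T,
      ncSum a κ U * rootedNCSum a (WordSeries.leftDeriv (a s) F) κ (T \ U) := by
  have hsB {U B : Finset ι} {Q : Finset (Finset ι)} (h : IsRootedNCPartition (T \ U) B Q) :
      ∀ x ∈ B, s < x := fun x hx => hs x (Finset.mem_sdiff.1 (h.subset hx)).1
  simp only [rootedNCSum, ncSum, Finset.sum_mul_sum, ← Finset.sum_product', Finset.sum_sigma']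
  symm
  refine Finset.sum_bij' (fun q _ => (insert s q.2.2.1, q.2.1 ∪ q.2.2.2))
    (fun p _ => ⟨allBelow T (p.1.erase s), p.2.filter (· ⊆ allBelow T (p.1.erase s)),
      p.1.erase s, p.2.filter (¬ · ⊆ allBelow T (p.1.erase s))⟩) ?_ ?_ ?_ ?_ ?_ <;>
    simp only [Sigma.forall, Prod.forall, Finset.mem_sigma, Finset.mem_product, mem_cuts,
      mem_ncPartitions, mem_rootedNCPartitions, and_imp]
  · exact fun U P B Q hU hP hQ => hU.isRootedNCPartition_insert hs hP hQ
  · intro C P h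
    have hsT : s ∉ T := fun h => (hs s h).false
    rw [← Finset.insert_erase (h.mem_of_forall_lt hs)] at h
    exact ⟨isCut_allBelow _ _, h.isNCPartition_allBelow hsT,
      h.sdiff_allBelow hsT (Finset.notMem_erase s C)⟩
  · intro U P B Q hU hP hQ
    rw [Finset.erase_insert fun h => (hsB hQ s h).false, hU.allBelow_eq hQ,
      hQ.filter_subset_eq hP, hQ.filter_not_subset_eq hP]
  · intro C P h
    rw [Finset.insert_erase (h.mem_of_forall_lt hs), Finset.filter_union_filter_not_eq]
  · intro U P B Q _ hP hQ
    rw [subword_insert a (hsB hQ), Finset.prod_union (hQ.disjoint hP),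
      WordSeries.leftDeriv_apply]
    ring

lemma cuts_insert {s : ι} {T : Finset ι} (hs : ∀ x ∈ T, s < x) :
    cuts (insert s T) = insert ∅ ((cuts T).image (insert s)) := by
  ext U
  simp only [mem_cuts, Finset.mem_insert, Finset.mem_image]
  constructor
  · rintro ⟨hUT, hU⟩
    refine or_iff_not_imp_left.2 fun hne => ?_
    obtain ⟨x, hx⟩ := Finset.nonempty_iff_ne_empty.2 hne
    have : s ∉ T := fun h => (hs s h).false
    have hsU : s ∈ U := by grind
    refine ⟨U.erase s, ⟨by grind, fun x hx y hy => hU x (by grind) y (by grind)⟩,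
      Finset.insert_erase hsU⟩
  · rintro (rfl | ⟨U, ⟨hUT, hU⟩, rfl⟩)
    · simp [IsCut]
    · exact ⟨by grind, by grind⟩

lemma mul_subword (T : Finset ι) :
    (F * G) (subword a T) = ∑ U ∈ cuts T, F (subword a U) * G (subword a (T \ U)) := by
  induction T using Finset.induction_on_min generalizing F with
  | empty =>
    have h : cuts (∅ : Finset ι) = {∅} := by ext U; simp [IsCut]
    simp [subword_empty, h]
  | insert s T hs ih =>
    have hsT : s ∉ T := fun h => (hs s h).false
    have hinj : Set.InjOn (insert s) (cuts T : Set (Finset ι)) := fun U hU V hV h => by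
      rw [← Finset.erase_insert fun h => hsT ((mem_cuts.1 hU).1 h), h,
        Finset.erase_insert fun h => hsT ((mem_cuts.1 hV).1 h)]
    rw [subword_insert a hs, WordSeries.mul_cons, ih, cuts_insert hs, Finset.sum_insert (by simp),
      Finset.sum_image hinj, Finset.sdiff_empty, subword_insert a hs, subword_empty]
    congr 1
    refine Finset.sum_congr rfl fun U hU => ?_
    have hUT : U ⊆ T := (mem_cuts.1 hU).1
    rw [subword_insert a fun x hx => hs x (hUT hx), WordSeries.leftDeriv_apply]
    congr 3
    grind

lemma eq_empty_or_exists_insert_min (S : Finset ι) :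
    S = ∅ ∨ ∃ s T, (∀ x ∈ T, s < x) ∧ S = insert s T := by
  refine S.eq_empty_or_nonempty.imp_right fun hS => ⟨S.min' hS, S.erase (S.min' hS), ?_, ?_⟩
  · exact fun x => S.min'_lt_of_mem_erase_min' hS
  · exact (Finset.insert_erase (S.min'_mem hS)).symm

lemma rootedNCSum_empty : rootedNCSum a F κ ∅ = F [] := by
  have h : rootedNCPartitions (∅ : Finset ι) = {(∅, ∅)} := by
    ext ⟨B, P⟩
    rw [mem_rootedNCPartitions, Finset.mem_singleton, Prod.mk.injEq]
    constructor
    · exact fun h => ⟨Finset.subset_empty.1 h.subset,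
        isNCPartition_empty_iff.1 (Finset.empty_sdiff B ▸ h.isNCPartition)⟩
    · rintro ⟨rfl, rfl⟩
      exact ⟨subset_rfl, isNCPartition_empty_iff.2 rfl, by simp, by simp⟩
  simp [rootedNCSum, h, subword_empty]

lemma rootedNCSum_eq_subst {M : WordSeries R A} (S : Finset ι)
    (hM : ∀ T ⊂ S, ncSum a κ T = M (subword a T)) :
    rootedNCSum a F κ S = WordSeries.subst M F (subword a S) := by
  induction S using Finset.strongInduction generalizing F with
  | H S ih =>
    obtain rfl | ⟨s, T, hs, rfl⟩ := eq_empty_or_exists_insert_min S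
    · rw [rootedNCSum_empty, subword_empty, WordSeries.subst_nil]
    have hT : T ⊂ insert s T := Finset.ssubset_insert fun h => (hs s h).false
    rw [rootedNCSum_insert a F κ hs, subword_insert a hs, ← WordSeries.leftDeriv_apply,
      WordSeries.leftDeriv_subst, mul_subword]
    refine Finset.sum_congr rfl fun U hU => ?_
    have hTU : T \ U ⊂ insert s T := Finset.sdiff_subset.trans_ssubset hT
    rw [hM U ((mem_cuts.1 hU).1.trans_ssubset hT), ih _ hTU _ fun V hV => hM V (hV.trans hTU)]

variable {S B : Finset ι} {P : Finset (Finset ι)} {s : ι}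

lemma isRootedNCPartition_iff (hs : s ∈ S) (hmin : ∀ x ∈ S, s ≤ x) :
    IsRootedNCPartition S B P ↔ s ∈ B ∧ B ∉ P ∧ IsNCPartition S (insert B P) := by
  constructor
  · intro h
    have hP := h.isNCPartition
    have hsub : ∀ V ∈ P, V ⊆ S \ B := fun V => hP.subset
    obtain ⟨b, hbB, hbs⟩ := h.exists_le hs
    obtain rfl := hbs.antisymm (hmin b (h.subset hbB))
    refine ⟨hbB, fun hBP => (Finset.mem_sdiff.1 (hsub B hBP hbB)).2 hbB, ?_, fun x => ?_, ?_, ?_⟩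
    · grind [hP.nonempty]
    · have := hP.mem_iff x
      have := @h.subset x
      grind
    · grind [hP.eq_of_mem]
    · intro V W a b c d hV hW ha hb hc hd hab hbc hcd
      rw [Finset.mem_insert] at hV hW
      obtain rfl | hV := hV <;> obtain rfl | hW := hW
      · rfl
      · exact absurd (h.not_separates hW hb hd hc hbc) hcd.not_ge
      · exact absurd (h.not_separates hV ha hc hb hab) hbc.not_ge
      · exact hP.noncrossing hV hW ha hb hc hd hab hbc hcd
  · rintro ⟨hsB, hBP, h⟩
    have hB := Finset.mem_insert_self B P
    have hP {V} (hV : V ∈ P) := Finset.mem_insert_of_mem (b := B) hV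
    have hxB {V x} (hV : V ∈ P) (hxV : x ∈ V) : x ∉ B := fun hxB =>
      hBP (h.eq_of_mem hB (hP hV) hxB hxV ▸ hV)
    refine ⟨h.subset hB, ⟨fun hV => h.nonempty (hP hV), fun x => ?_,
      fun hV hW => h.eq_of_mem (hP hV) (hP hW), fun hV hW => h.noncrossing (hP hV) (hP hW)⟩,
      fun hx => ⟨s, hsB, hmin _ hx⟩, fun {V x y b} hV hx hy hb hxb => ?_⟩
    · rw [Finset.mem_sdiff, h.mem_iff, Finset.exists_mem_insert]
      grind
    · by_contra! hby
      have hsx : s < x := (hmin x (h.subset (hP hV) hx)).lt_of_ne fun hsx =>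
        hxB hV hx (hsx ▸ hsB)
      exact hBP (h.noncrossing hB (hP hV) hsB hx hb hy hsx hxb hby ▸ hV)

lemma ncSum_eq_rootedNCSum (hs : s ∈ S) (hmin : ∀ x ∈ S, s ≤ x) :
    ncSum a κ S = rootedNCSum a κ κ S := by
  have hroot {B P} := isRootedNCPartition_iff (B := B) (P := P) hs hmin
  symm
  refine Finset.sum_bij (fun p _ => insert p.1 p.2) ?_ ?_ ?_ ?_ <;>
    simp only [Prod.forall, Prod.exists, mem_rootedNCPartitions, mem_ncPartitions, hroot]
  · exact fun _ _ h => h.2.2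
  · rintro B P ⟨hB, hBP, -⟩ B' P' ⟨hB', hBP', h'⟩ heq
    have hBB' : B = B' :=
      h'.eq_of_mem (heq ▸ Finset.mem_insert_self B P) (Finset.mem_insert_self B' P') hB hB'
    subst hBB'
    rw [← Finset.erase_insert hBP, heq, Finset.erase_insert hBP']
  · intro P h
    obtain ⟨B, hBP, hsB⟩ := (h.mem_iff s).1 hs
    have hins := Finset.insert_erase hBP
    exact ⟨B, P.erase B, ⟨hsB, Finset.notMem_erase B P, hins.symm ▸ h⟩, hins⟩
  · exact fun _ _ h => by rw [Finset.prod_insert h.2.1]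

lemma ncSum_empty : ncSum a κ ∅ = 1 := by
  have h : ncPartitions (∅ : Finset ι) = {∅} := by
    ext P
    rw [mem_ncPartitions, isNCPartition_empty_iff, Finset.mem_singleton]
  simp [ncSum, h]

lemma ncSum_eq_subst {M : WordSeries R A} (hS : S.Nonempty)
    (hM : ∀ T ⊂ S, ncSum a κ T = M (subword a T)) :
    ncSum a κ S = WordSeries.subst M κ (subword a S) := by
  rw [ncSum_eq_rootedNCSum a κ (S.min'_mem hS) fun x hx => S.min'_le x hx,
    rootedNCSum_eq_subst a κ κ S hM]

end NoncrossingSums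

section MomentCumulant

variable {R A : Type*}

lemma subword_univ {n : ℕ} (a : Fin n → A) : subword a Finset.univ = List.ofFn a := by
  rw [subword, Fin.sort_univ, List.ofFn_eq_map]

variable [CommRing R] {M κ : WordSeries R A}

/-- The moment-cumulant relation only mentions the full set `{0, …, m - 1}`; a subset is reduced to
it by relabelling, since both sums depend only on the subword. -/
lemma ncSum_eq_of_univ (hM : M [] = 1)
    (h : ∀ m, 1 ≤ m → ∀ b : Fin m → A, ncSum b κ Finset.univ = M (List.ofFn b))
    {n : ℕ} (a : Fin n → A) (S : Finset (Fin n)) : ncSum a κ S = M (subword a S) := by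
  induction hk : S.card using Nat.strong_induction_on generalizing n with
  | h k ih =>
    obtain rfl | hS := S.eq_empty_or_nonempty
    · rw [ncSum_empty, subword_empty, hM]
    set b := (subword a S).get
    have hlen : (subword a S).length = S.card := length_subword a S
    have hbS : List.ofFn b = subword a S := List.ofFn_get _
    have hpos : 1 ≤ (subword a S).length := hlen ▸ hS.card_pos
    rw [← hbS, ← h _ hpos b, ncSum_eq_subst a κ hS, ncSum_eq_subst b κ, subword_univ, hbS]
    · exact ⟨⟨0, hpos⟩, Finset.mem_univ _⟩
    · exact fun T hT => ih _ (by simpa [hlen, hk] using Finset.card_lt_card hT) b T rfl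
    · exact fun T hT => ih _ (hk ▸ Finset.card_lt_card hT) a T rfl

lemma subst_eq_of_ncSum (hM : M [] = 1) (hκ : κ [] = 1)
    (h : ∀ m, 1 ≤ m → ∀ b : Fin m → A, ncSum b κ Finset.univ = M (List.ofFn b)) :
    WordSeries.subst M κ = M := DFunLike.ext _ _ fun w => by
  obtain rfl | hw := eq_or_ne w []
  · rw [WordSeries.subst_nil, hM, hκ]
  have hpos : 0 < w.length := List.length_pos_iff.2 hw
  rw [← List.ofFn_get w, ← h _ hpos, ncSum_eq_subst _ κ ⟨⟨0, hpos⟩, Finset.mem_univ _⟩,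
    subword_univ]
  exact fun T _ => ncSum_eq_of_univ hM h _ T

lemma finsum_blockApply_eq_ncSum {n : ℕ} (κ : WordSeries ℂ A) (a : Fin n → A) :
    ∑ᶠ π ∈ {π : NPart n | IsNoncrossing π}, blockApply κ a π = ncSum a κ Finset.univ := by
  rw [ncSum, ← finsum_mem_coe_finset]
  refine finsum_mem_eq_of_bijOn Finpartition.parts
    ⟨fun π hπ => ?_, fun π _ σ _ => ?_, fun P hP => ?_⟩ fun _ _ => rfl
  · refine mem_ncPartitions.2 ⟨fun hV => π.nonempty_of_mem_parts hV, fun x => ?_,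
      fun hV hW hxV hxW => π.eq_of_mem_parts hV hW hxV hxW,
      fun hV hW ha hb hc hd hab hbc hcd => hπ _ _ _ _ hab hbc hcd _ hV _ hW ha hc hb hd⟩
    simpa using π.exists_mem (Finset.mem_univ x)
  · exact Finpartition.ext
  · rw [Finset.mem_coe, mem_ncPartitions] at hP
    refine ⟨Finpartition.ofExistsUnique P (fun V _ => V.subset_univ) (fun x hx => ?_)
      fun h => Finset.not_nonempty_empty (hP.nonempty h), ?_, rfl⟩
    · obtain ⟨V, hV, hxV⟩ := (hP.mem_iff x).1 hx
      exact ⟨V, ⟨hV, hxV⟩, fun W hW => hP.eq_of_mem hW.1 hV hW.2 hxV⟩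
    · exact fun _ _ _ _ hab hbc hcd _ hV _ hW ha hc hb hd =>
        hP.noncrossing hV hW ha hb hc hd hab hbc hcd

end MomentCumulant

/-! ### Schröder trees -/

namespace PTree

section Paths

variable (c : PTree) (cs : List PTree) (i : ℕ) (p q : List ℕ)

/-- The path of a vertex of `node cs`, seen in `node (c :: cs)`. -/
def shiftPath : List ℕ → List ℕ
  | [] => []
  | i :: p => (i + 1) :: p

lemma shiftPath_injective : Function.Injective shiftPath := by
  rintro (- | ⟨i, p⟩) (- | ⟨j, q⟩) h <;> simp_all [shiftPath]

lemma shiftPath_isPrefix_iff {p q : List ℕ} : shiftPath p <+: shiftPath q ↔ p <+: q := by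
  cases p <;> cases q <;> simp [shiftPath, List.cons_prefix_cons]

lemma zero_cons_or_shiftPath : (∃ q, p = 0 :: q) ∨ ∃ q, p = shiftPath q := by
  obtain - | ⟨- | i, q⟩ := p
  · exact Or.inr ⟨[], rfl⟩
  · exact Or.inl ⟨q, rfl⟩
  · exact Or.inr ⟨i :: q, rfl⟩

@[simp] lemma zero_cons_ne_shiftPath : 0 :: p ≠ shiftPath q := by
  cases q <;> simp [shiftPath]

lemma disjoint_zero_cons_image_shiftPath_image (s t : Set (List ℕ)) :
    Disjoint ((0 :: ·) '' s) (shiftPath '' t) := by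
  rw [Set.disjoint_left]
  rintro _ ⟨p, -, rfl⟩ ⟨q, -, h⟩
  exact zero_cons_ne_shiftPath p q h.symm

@[simp] lemma shiftPath_eq_nil : shiftPath p = [] ↔ p = [] := by
  cases p <;> simp [shiftPath]

@[simp] lemma shiftPath_eq_succ_cons : shiftPath p = (i + 1) :: q ↔ p = i :: q := by
  cases p <;> simp [shiftPath]

lemma isLeafAt_zero_cons : IsLeafAt (node (c :: cs)) (0 :: p) ↔ IsLeafAt c p := Iff.rfl

lemma finite_setOf_isVertex : ∀ t, {p | IsVertex t p}.Finite
  | node [] => (Set.finite_singleton []).subset fun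
    | [], _ => rfl
    | _ :: _, h => by simp [IsVertex, subtreeAt] at h
  | node (c :: cs) => by
    refine (((finite_setOf_isVertex c).image (0 :: ·)).union
      (((finite_setOf_isVertex (node cs)).image shiftPath))).subset ?_
    rintro (- | ⟨- | i, p⟩) h
    · exact Or.inr ⟨[], rfl, rfl⟩
    · exact Or.inl ⟨p, h, rfl⟩
    · exact Or.inr ⟨i :: p, h, rfl⟩

lemma IsLeafAt.isVertex {t : PTree} (h : IsLeafAt t p) : IsVertex t p := by
  rw [IsVertex, h, Option.isSome_some]

lemma IsInternalAt.isVertex {t : PTree} (h : IsInternalAt t p) : IsVertex t p := by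
  obtain ⟨cs, hcs, -⟩ := h
  rw [IsVertex, hcs, Option.isSome_some]

@[simp] lemma isLeafAt_nil : IsLeafAt (node cs) [] ↔ cs = [] := by
  simp [IsLeafAt, subtreeAt]

variable {cs} in
lemma ncard_isLeafAt_cons (hcs : cs ≠ []) (P : List ℕ → Prop) :
    {q | IsLeafAt (node (c :: cs)) q ∧ P q}.ncard = {q | IsLeafAt c q ∧ P (0 :: q)}.ncard +
      {q | IsLeafAt (node cs) q ∧ P (shiftPath q)}.ncard := by
  have hfin (t : PTree) (Q : List ℕ → Prop) : {q | IsLeafAt t q ∧ Q q}.Finite :=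
    (finite_setOf_isVertex t).subset fun q hq => hq.1.isVertex
  have hunion : {q | IsLeafAt (node (c :: cs)) q ∧ P q} =
      (0 :: ·) '' {q | IsLeafAt c q ∧ P (0 :: q)} ∪
        shiftPath '' {q | IsLeafAt (node cs) q ∧ P (shiftPath q)} := by
    ext (- | ⟨- | i, q⟩)
    · simp [hcs]
    · have hq (p) : shiftPath p ≠ 0 :: q := (zero_cons_ne_shiftPath q p).symm
      simp [isLeafAt_zero_cons, hq]
    · constructor
      · exact fun h => Or.inr ⟨i :: q, h, rfl⟩
      · rintro (⟨p, -, h⟩ | ⟨p, hp, h⟩)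
        · simp at h
        · obtain rfl := (shiftPath_eq_succ_cons i p q).1 h
          exact hp
  rw [hunion, Set.ncard_union_eq (disjoint_zero_cons_image_shiftPath_image _ _)
      ((hfin _ _).image _) ((hfin _ _).image _),
    Set.ncard_image_of_injective _ List.cons_injective,
    Set.ncard_image_of_injective _ shiftPath_injective]

lemma numLeaves_eq_ncard (t : PTree) : numLeaves t = {q | IsLeafAt t q ∧ True}.ncard := by
  simp only [and_true]
  rfl

@[simp] lemma numLeaves_leaf : numLeaves leaf = 1 := by
  have : {q | IsLeafAt leaf q} = {[]} := by
    ext (- | ⟨i, q⟩) <;> simp [IsLeafAt, subtreeAt]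
  exact (congrArg Set.ncard this).trans (Set.ncard_singleton _)

lemma numLeaves_singleton : numLeaves (node [c]) = numLeaves c := by
  have : {q | IsLeafAt (node [c]) q} = (0 :: ·) '' {q | IsLeafAt c q} := by
    ext (- | ⟨- | i, q⟩) <;> simp [IsLeafAt, subtreeAt]
  exact (congrArg Set.ncard this).trans (Set.ncard_image_of_injective _ List.cons_injective)

@[simp] lemma numLeaves_cons :
    numLeaves (node (c :: cs)) = numLeaves c + (cs.map numLeaves).sum := by
  induction cs generalizing c with
  | nil => simp [numLeaves_singleton]
  | cons d ds ih =>
    rw [numLeaves_eq_ncard, ncard_isLeafAt_cons c (List.cons_ne_nil d ds), ← numLeaves_eq_ncard,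
      ← numLeaves_eq_ncard, ih, List.map_cons, List.sum_cons]

lemma leavesBefore_zero_cons : leavesBefore (node (c :: cs)) (0 :: p) = leavesBefore c p := by
  have : {q | IsLeafAt (node (c :: cs)) q ∧ List.Lex (· < ·) q (0 :: p) ∧ ¬ 0 :: p <+: q} =
      (0 :: ·) '' {q | IsLeafAt c q ∧ List.Lex (· < ·) q p ∧ ¬ p <+: q} := by
    ext (- | ⟨- | i, q⟩)
    · simp
    · simp [isLeafAt_zero_cons]
    · simp [List.cons_lt_cons_iff, -not_lt, -List.not_lt]
  exact (congrArg Set.ncard this).trans (Set.ncard_image_of_injective _ List.cons_injective)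

variable {cs} in
lemma leavesBefore_succ_cons (hcs : cs ≠ []) : leavesBefore (node (c :: cs)) ((i + 1) :: p) =
    numLeaves c + leavesBefore (node cs) (i :: p) := by
  refine (ncard_isLeafAt_cons c hcs fun q => List.Lex (· < ·) q ((i + 1) :: p) ∧
    ¬ (i + 1) :: p <+: q).trans ?_
  rw [numLeaves_eq_ncard]
  congr 3
  · ext q
    simp [List.cons_lt_cons_iff]
  · ext (- | ⟨j, q⟩) <;> simp [shiftPath, hcs, List.cons_lt_cons_iff]

end Paths

section Sectors

variable {t c : PTree} {cs : List PTree} {v p : List ℕ} {i k m : ℕ}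

lemma SectorIn.isInternalAt (h : SectorIn t p k) : IsInternalAt t p := by
  have hleaf : subtree! t p ≠ leaf := fun hleaf => by
    have := numLeaves_leaf
    grind [SectorIn]
  obtain hnone | ⟨⟨cs⟩, ht⟩ := Option.eq_none_or_eq_some (subtreeAt p t)
  · simp [subtree!, hnone] at hleaf
  · exact ⟨cs, ht, by simpa [subtree!, ht] using hleaf⟩

@[simp] lemma sectorIn_nil : SectorIn t [] k ↔ k + 2 ≤ numLeaves t := by
  have h : leavesBefore t [] = 0 := Nat.card_eq_zero.2 (Or.inl ⟨fun q => q.2.2.2 List.nil_prefix⟩)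
  simp [SectorIn, h, subtree!, subtreeAt]

lemma not_isInternalAt_leaf : ¬ IsInternalAt leaf p := by
  rintro ⟨cs, hcs, hne⟩
  cases p <;> simp_all [subtreeAt]

lemma not_sectorIn_leaf : ¬ SectorIn leaf p k := fun h => not_isInternalAt_leaf h.isInternalAt

lemma sectorIn_zero_cons : SectorIn (node (c :: cs)) (0 :: p) k ↔ SectorIn c p k := by
  rw [SectorIn, leavesBefore_zero_cons]
  rfl

lemma sectorIn_succ_cons : SectorIn (node (c :: cs)) ((i + 1) :: p) k ↔
    ∃ j, k = numLeaves c + j ∧ SectorIn (node cs) (i :: p) j := by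
  obtain rfl | hcs := eq_or_ne cs []
  · refine iff_of_false (fun h => ?_) fun ⟨j, _, h⟩ => not_sectorIn_leaf h
    obtain ⟨ds, h, -⟩ := h.isInternalAt
    simp [subtreeAt] at h
  have hsub : subtree! (node (c :: cs)) ((i + 1) :: p) = subtree! (node cs) (i :: p) := rfl
  rw [SectorIn, leavesBefore_succ_cons c i p hcs, hsub]
  constructor
  · intro h
    exact ⟨k - numLeaves c, by omega, by unfold SectorIn; omega⟩
  · rintro ⟨j, rfl, h⟩
    unfold SectorIn at h
    omega

lemma SectorIn.add_two_le (h : SectorIn t p k) : k + 2 ≤ numLeaves t := by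
  induction p generalizing t k with
  | nil => exact sectorIn_nil.1 h
  | cons i p ih =>
    obtain ⟨cs⟩ := t
    induction cs generalizing i k with
    | nil => exact absurd h not_sectorIn_leaf
    | cons c cs ihcs =>
      cases i with
      | zero => exact (ih (sectorIn_zero_cons.1 h)).trans (by simp)
      | succ i =>
        obtain ⟨j, rfl, hj⟩ := sectorIn_succ_cons.1 h
        cases cs with
        | nil => exact absurd hj not_sectorIn_leaf
        | cons d ds =>
          have := ihcs i hj
          simp only [numLeaves_cons, List.map_cons, List.sum_cons] at this ⊢
          omega

lemma ownsSector_iff : OwnsSector t v k ↔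
    SectorIn t v k ∧ ∀ w, v <+: w → w ≠ v → ¬ SectorIn t w k := by
  constructor
  · exact fun h => ⟨h.2.1, fun w hvw hwv hw => h.2.2 w hw.isInternalAt hvw hwv hw⟩
  · exact fun h => ⟨h.1.isInternalAt, h.1, fun w _ => h.2 w⟩

lemma sectorIn_cons_add (hc : numLeaves c = m + 1) :
    SectorIn (node (c :: cs)) v (m + k) ↔ SectorIn (node (leaf :: cs)) v k := by
  obtain - | ⟨- | i, p⟩ := v
  · simp only [sectorIn_nil, numLeaves_cons, numLeaves_leaf, hc]
    omega
  · rw [sectorIn_zero_cons, sectorIn_zero_cons]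
    refine iff_of_false (fun h => ?_) not_sectorIn_leaf
    have := h.add_two_le
    omega
  · simp only [sectorIn_succ_cons, hc, numLeaves_leaf, add_assoc, add_right_inj]

lemma ownsSector_cons_add (hc : numLeaves c = m + 1) :
    OwnsSector (node (c :: cs)) v (m + k) ↔ OwnsSector (node (leaf :: cs)) v k := by
  simp only [ownsSector_iff, sectorIn_cons_add hc]

lemma ownsSector_zero_cons : OwnsSector (node (c :: cs)) (0 :: p) k ↔ OwnsSector c p k := by
  simp only [ownsSector_iff, sectorIn_zero_cons]
  refine and_congr_right fun _ => ⟨fun h w hpw hne => ?_, ?_⟩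
  · rw [← sectorIn_zero_cons (cs := cs)]
    exact h _ ((List.prefix_cons_inj 0).2 hpw) fun h => hne (List.cons.inj h).2
  · rintro h _ ⟨w, rfl⟩ hne
    exact sectorIn_zero_cons.not.2 (h _ (List.prefix_append p w) (by simpa using hne))

lemma sectorIn_leaf_cons : SectorIn (node (leaf :: c :: cs)) (shiftPath v) (k + 1) ↔
    SectorIn (node (c :: cs)) v k := by
  obtain - | ⟨i, p⟩ := v
  · simp only [shiftPath, sectorIn_nil, numLeaves_cons, numLeaves_leaf, List.map_cons,
      List.sum_cons]
    omega
  · simp [shiftPath, sectorIn_succ_cons, add_comm 1]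

lemma ownsSector_leaf_cons : OwnsSector (node (leaf :: c :: cs)) (shiftPath v) (k + 1) ↔
    OwnsSector (node (c :: cs)) v k := by
  simp only [ownsSector_iff, sectorIn_leaf_cons]
  refine and_congr_right fun _ => ⟨fun h w hvw hne => ?_, fun h w hvw hne => ?_⟩
  · rw [← sectorIn_leaf_cons]
    exact h _ (shiftPath_isPrefix_iff.2 hvw) (shiftPath_injective.ne hne)
  · obtain ⟨u, rfl⟩ | ⟨w, rfl⟩ := zero_cons_or_shiftPath w
    · exact sectorIn_zero_cons.not.2 not_sectorIn_leaf
    · exact sectorIn_leaf_cons.not.2 (h w (shiftPath_isPrefix_iff.1 hvw) (ne_of_apply_ne _ hne))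

lemma numLeaves_pos : ∀ t, 0 < numLeaves t
  | node [] => by simp
  | node (c :: cs) => by simp [numLeaves_pos c]

lemma ownsSector_leaf_cons_zero :
    OwnsSector (node (leaf :: c :: cs)) (shiftPath v) 0 ↔ v = [] := by
  have hcons (i : ℕ) (p : List ℕ) : ¬ SectorIn (node (leaf :: c :: cs)) (i :: p) 0 := by
    cases i
    · exact sectorIn_zero_cons.not.2 not_sectorIn_leaf
    · rw [sectorIn_succ_cons, numLeaves_leaf]
      rintro ⟨j, hj, -⟩
      omega
  rw [ownsSector_iff]
  obtain - | ⟨i, p⟩ := v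
  · have := numLeaves_pos c
    refine iff_of_true ⟨sectorIn_nil.2 (by simp; omega), fun w _ hne => ?_⟩ rfl
    obtain ⟨i, p, rfl⟩ := List.exists_cons_of_ne_nil hne
    exact hcons i p
  · exact iff_of_false (fun h => hcons _ _ h.1) (List.cons_ne_nil i p)

lemma not_ownsSector_of_add_two_le (hk : k + 2 ≤ numLeaves c) (hv : ∀ p, v ≠ 0 :: p) :
    ¬ OwnsSector (node (c :: cs)) v k := by
  rw [ownsSector_iff]
  rintro ⟨h, hmin⟩
  obtain - | ⟨- | i, p⟩ := v
  · exact hmin [0] List.nil_prefix (by simp) (sectorIn_zero_cons.2 (sectorIn_nil.2 hk))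
  · exact hv p rfl
  · obtain ⟨j, rfl, -⟩ := sectorIn_succ_cons.1 h
    omega

end Sectors

section InternalVertices

variable (t c : PTree) (cs : List PTree)

lemma setOf_isInternalAt_cons : {v | IsInternalAt (node (c :: cs)) v} =
    (0 :: ·) '' {v | IsInternalAt c v} ∪ {v | IsInternalAt (node (leaf :: cs)) v} := by
  ext (- | ⟨- | i, p⟩)
  · simp [IsInternalAt, subtreeAt]
  · refine ⟨fun h => Or.inl ⟨p, h, rfl⟩, ?_⟩
    rintro (⟨_, h, ⟨⟩⟩ | h)
    · exact h
    · exact (not_isInternalAt_leaf h).elim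
  · refine ⟨Or.inr, ?_⟩
    rintro (⟨_, -, ⟨⟩⟩ | h)
    exact h

lemma setOf_isInternalAt_leaf_cons_cons : {v | IsInternalAt (node (leaf :: c :: cs)) v} =
    shiftPath '' {v | IsInternalAt (node (c :: cs)) v} := by
  ext v
  obtain ⟨p, rfl⟩ | ⟨v, rfl⟩ := zero_cons_or_shiftPath v
  · refine iff_of_false not_isInternalAt_leaf ?_
    rintro ⟨v, -, h⟩
    exact zero_cons_ne_shiftPath p v h.symm
  · rw [shiftPath_injective.mem_set_image]
    cases v
    · simp [IsInternalAt, subtreeAt, shiftPath]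
    · rfl

lemma finite_setOf_isInternalAt : {v | IsInternalAt t v}.Finite :=
  (finite_setOf_isVertex t).subset fun _ hv => hv.isVertex

end InternalVertices

section Select

variable {A : Type*}

open Classical in
/-- The subword of the letters of `w` whose positions, counted from `0`, satisfy `p`. -/
noncomputable def select (p : ℕ → Prop) : List A → List A
  | [] => []
  | x :: w => if p 0 then x :: select (fun k => p (k + 1)) w else select (fun k => p (k + 1)) w

lemma select_append (p : ℕ → Prop) (u w : List A) :
    select p (u ++ w) = select p u ++ select (fun k => p (u.length + k)) w := by
  induction u generalizing p with
  | nil => simp [select]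
  | cons x u ih =>
    simp only [List.cons_append, select, ih, List.length_cons, add_right_comm, add_assoc]
    split_ifs <;> simp

lemma select_eq_nil {p : ℕ → Prop} {w : List A} (h : ∀ k < w.length, ¬ p k) :
    select p w = [] := by
  induction w generalizing p with
  | nil => rfl
  | cons x w ih =>
    rw [select, if_neg (h 0 (by simp)), ih fun k hk => h (k + 1) (by simpa)]

open Classical in
lemma map_getD_filter_range [Zero A] (p : ℕ → Prop) (w : List A) :
    ((List.range w.length).filter fun i => p i).map (fun i => w.getD i 0) = select p w := by
  induction w generalizing p with
  | nil => rfl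
  | cons x w ih =>
    rw [select, ← ih, List.length_cons, List.range_succ_eq_map]
    by_cases h : p 0 <;> simp [h, List.filter_map, Function.comp_def]

end Select

variable {R A : Type*} [CommRing R]

/-- The product over the internal vertices `v` of `t` of the coefficient of the word of the letters
in the sectors owned by `v`, in the series `F` for the root and `G` for all other vertices. -/
noncomputable def treeWeight (F G : WordSeries R A) (t : PTree) (w : List A) : R :=
  ∏ᶠ v ∈ {v | IsInternalAt t v}, (if v = [] then F else G) (select (OwnsSector t v) w)

section TreeWeight

variable (F G : WordSeries R A) (c : PTree) (cs : List PTree)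

lemma treeWeight_leaf (w : List A) : treeWeight F G leaf w = 1 :=
  finprod_mem_of_eqOn_one fun _ hv => (not_isInternalAt_leaf hv).elim

lemma treeWeight_node_leaf : treeWeight F G (node [leaf]) [] = F [] := by
  have h : {v | IsInternalAt (node [leaf]) v} = {[]} := by
    ext (- | ⟨- | i, p⟩)
    · simp [IsInternalAt, subtreeAt]
    · exact iff_of_false not_isInternalAt_leaf (List.cons_ne_nil _ _)
    · simp [IsInternalAt, subtreeAt]
  rw [treeWeight, h, finprod_mem_singleton, if_pos rfl, select]

lemma treeWeight_cons_append {u : List A} (hc : c ∈ ST u.length) (w : List A) :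
    treeWeight F G (node (c :: cs)) (u ++ w) =
      treeWeight G G c u * treeWeight F G (node (leaf :: cs)) w := by
  have hzero {v : List ℕ} (hv : IsInternalAt (node (leaf :: cs)) v) (p : List ℕ) : v ≠ 0 :: p := by
    rintro rfl
    exact not_isInternalAt_leaf hv
  rw [treeWeight, setOf_isInternalAt_cons, finprod_mem_union _
    ((finite_setOf_isInternalAt c).image _) (finite_setOf_isInternalAt _),
    finprod_mem_image List.cons_injective.injOn]
  · congr 1
    · refine finprod_mem_congr rfl fun v _ => ?_
      have hw : select (fun k => OwnsSector (node (c :: cs)) (0 :: v) (u.length + k)) w = [] :=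
        select_eq_nil fun k _ h =>
          not_sectorIn_leaf (ownsSector_zero_cons.1 ((ownsSector_cons_add hc.2).1 h)).2.1
      have hv : OwnsSector (node (c :: cs)) (0 :: v) = OwnsSector c v :=
        funext fun k => propext ownsSector_zero_cons
      rw [select_append, hw, hv, List.append_nil, if_neg (List.cons_ne_nil _ _), ite_self]
    · refine finprod_mem_congr rfl fun v hv => ?_
      have hu : select (OwnsSector (node (c :: cs)) v) u = [] := select_eq_nil fun k hk =>
        not_ownsSector_of_add_two_le (by rw [hc.2]; omega) (hzero hv)
      rw [select_append, hu, List.nil_append]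
      simp only [ownsSector_cons_add hc.2]
  · rw [Set.disjoint_left]
    rintro _ ⟨p, -, rfl⟩ hp
    exact hzero hp p rfl

lemma treeWeight_leaf_cons_cons (x : A) (w : List A) :
    treeWeight F G (node (leaf :: c :: cs)) (x :: w) =
      treeWeight (WordSeries.leftDeriv x F) G (node (c :: cs)) w := by
  rw [treeWeight, setOf_isInternalAt_leaf_cons_cons, finprod_mem_image shiftPath_injective.injOn]
  refine finprod_mem_congr rfl fun v _ => ?_
  simp only [select, ownsSector_leaf_cons, ownsSector_leaf_cons_zero, shiftPath_eq_nil]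
  split_ifs <;> rfl

end TreeWeight

lemma treeWeight_neg {A : Type*} [Ring A] {φ : A → ℂ} {M : WordSeries ℂ A}
    (hM : ∀ u, M u = φ u.prod) {t : PTree} (ht : IsInternalAt t []) (w : List A) :
    treeWeight M (-M) t w = (-1) ^ (numInternal t - 1) * phiPi φ t w := by
  have hfin := finite_setOf_isInternalAt t
  have hcard : numInternal t = hfin.toFinset.card := Nat.card_eq_card_finite_toFinset hfin
  have hmem : [] ∈ hfin.toFinset := hfin.mem_toFinset.2 ht
  simp only [phiPi, treeWeight, map_getD_filter_range, ← hM]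
  rw [finprod_mem_eq_finite_toFinset_prod _ hfin, finprod_mem_eq_finite_toFinset_prod _ hfin,
    ← Finset.mul_prod_erase _ _ hmem, ← Finset.mul_prod_erase (a := []) _ _ hmem, hcard,
    ← Finset.card_erase_of_mem hmem, ← Finset.prod_const, mul_left_comm,
    ← Finset.prod_mul_distrib, if_pos rfl]
  refine congrArg _ (Finset.prod_congr rfl fun v hv => ?_)
  rw [if_neg (Finset.ne_of_mem_erase hv), WordSeries.neg_apply, neg_one_mul]

/-- The ordered forests of Schröder trees with `n` leaves in total. -/
def forests (n : ℕ) : Set (List PTree) :=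
  {cs | (∀ c ∈ cs, IsSchroder c) ∧ (cs.map numLeaves).sum = n}

section Forests

variable {c : PTree} {cs : List PTree} {n : ℕ}

lemma cons_mem_forests_succ :
    c :: cs ∈ forests (n + 1) ↔ ∃ i ≤ n, c ∈ ST i ∧ cs ∈ forests (n - i) := by
  simp only [forests, ST, Set.mem_ofPred_eq, List.forall_mem_cons, List.map_cons, List.sum_cons]
  have := numLeaves_pos c
  constructor
  · rintro ⟨⟨hc, hcs⟩, hn⟩
    exact ⟨numLeaves c - 1, by omega, ⟨hc, by omega⟩, hcs, by omega⟩
  · rintro ⟨i, hi, ⟨hc, hci⟩, hcs, hn⟩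
    exact ⟨⟨hc, hcs⟩, by omega⟩

lemma nil_notMem_forests_succ : [] ∉ forests (n + 1) := fun h => by
  simpa using h.2

lemma forests_zero : forests 0 = {[]} := by
  ext (- | ⟨c, cs⟩)
  · simp [forests]
  · simp [forests, (numLeaves_pos c).ne']

lemma isSchroder_node_iff :
    IsSchroder (node cs) ↔ cs = [] ∨ 2 ≤ cs.length ∧ ∀ c ∈ cs, IsSchroder c := by
  constructor
  · rintro (_ | ⟨_, hlen, h⟩)
    · exact Or.inl rfl
    · exact Or.inr ⟨hlen, h⟩
  · rintro (rfl | ⟨hlen, h⟩)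
    · exact .leaf
    · exact .node cs hlen h

lemma node_mem_ST_succ : node cs ∈ ST (n + 1) ↔ 2 ≤ cs.length ∧ cs ∈ forests (n + 2) := by
  obtain - | ⟨c, cs⟩ := cs
  · simp [ST]
  · simp [ST, forests, isSchroder_node_iff, and_assoc]

lemma ST_zero : ST 0 = {leaf} := by
  ext ⟨cs⟩
  obtain - | ⟨c, - | ⟨d, cs⟩⟩ := cs
  · simp [ST, IsSchroder.leaf]
  · simp [ST, isSchroder_node_iff]
  · have := numLeaves_pos c
    have := numLeaves_pos d
    simp only [ST, Set.mem_ofPred_eq, numLeaves_cons, List.map_cons, List.sum_cons,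
      Set.mem_singleton_iff, node.injEq, List.cons_ne_nil, iff_false, not_and]
    omega

lemma finite_forests_of_finite_ST (h : ∀ i < n, (ST i).Finite) : (forests n).Finite := by
  induction n using Nat.strong_induction_on with
  | h n ih =>
    obtain - | n := n
    · exact forests_zero ▸ Set.finite_singleton []
    refine (Set.Finite.biUnion (Set.finite_Iic n) fun i hi => Set.Finite.image2 List.cons
      (h i (Nat.lt_succ_of_le hi)) (ih (n - i) (by omega) fun j hj => h j (by omega))).subset ?_
    rintro (- | ⟨c, cs⟩) hcs
    · exact (nil_notMem_forests_succ hcs).elim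
    · obtain ⟨i, hi, hc, hcs⟩ := cons_mem_forests_succ.1 hcs
      exact Set.mem_biUnion hi (Set.mem_image2_of_mem hc hcs)

lemma finite_ST (n : ℕ) : (ST n).Finite := by
  induction n using Nat.strong_induction_on with
  | h n ih =>
    obtain - | n := n
    · exact ST_zero ▸ Set.finite_singleton leaf
    have hforests {j : ℕ} (hj : j ≤ n + 1) : (forests j).Finite :=
      finite_forests_of_finite_ST fun i hi => ih i (by omega)
    refine ((Set.Finite.biUnion (Set.finite_Iic n) fun i hi => Set.Finite.image2 List.cons
      (ih i (Nat.lt_succ_of_le hi)) (hforests (Nat.sub_le (n + 1) i))).image node).subset ?_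
    rintro ⟨cs⟩ h
    obtain ⟨hlen, hcs⟩ := node_mem_ST_succ.1 h
    obtain - | ⟨c, - | ⟨d, cs⟩⟩ := cs <;> simp only [List.length_nil, List.length_cons] at hlen
    · omega
    · omega
    obtain ⟨i, hi, hc, hcs⟩ := cons_mem_forests_succ.1 hcs
    have hin : i ≤ n := by
      by_contra! hin
      obtain rfl : i = n + 1 := by omega
      simp [forests_zero] at hcs
    exact Set.mem_image_of_mem _ (Set.mem_biUnion hin (Set.mem_image2_of_mem hc hcs))

lemma finite_forests (n : ℕ) : (forests n).Finite :=
  finite_forests_of_finite_ST fun i _ => finite_ST i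

variable {R : Type*} [AddCommMonoid R] (f : List PTree → R)

lemma sum_forests_succ (n : ℕ) : ∑ cs ∈ (finite_forests (n + 1)).toFinset, f cs =
    ∑ i ∈ Finset.range (n + 1), ∑ c ∈ (finite_ST i).toFinset,
      ∑ cs ∈ (finite_forests (n - i)).toFinset, f (c :: cs) := by
  simp only [← Finset.sum_product', Finset.sum_sigma']
  symm
  refine Finset.sum_bij (fun p _ => p.2.1 :: p.2.2) ?_ ?_ ?_ fun _ _ => rfl <;>
    simp only [Finset.mem_sigma, Finset.mem_product, Finset.mem_range, Set.Finite.mem_toFinset,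
      Nat.lt_succ_iff, Sigma.forall, Prod.forall, Sigma.exists, Prod.exists]
  · exact fun i c cs h => cons_mem_forests_succ.2 ⟨i, h⟩
  · rintro i c cs ⟨-, hc, -⟩ j d ds ⟨-, hd, -⟩ heq
    obtain ⟨rfl, rfl⟩ := List.cons.inj heq
    obtain rfl : i = j := by have := hc.2.symm.trans hd.2; omega
    rfl
  · rintro (- | ⟨c, cs⟩) hcs
    · exact (nil_notMem_forests_succ hcs).elim
    · obtain ⟨i, h⟩ := cons_mem_forests_succ.1 hcs
      exact ⟨i, c, cs, h, rfl⟩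

lemma sum_forests_add_two (g : PTree → R) (n : ℕ) :
    ∑ cs ∈ (finite_forests (n + 2)).toFinset, g (node cs) =
      ∑ t ∈ (finite_ST (n + 1)).toFinset, g (node [t]) +
        ∑ t ∈ (finite_ST (n + 1)).toFinset, g t := by
  rw [← Finset.sum_filter_not_add_sum_filter _ fun cs : List PTree => 2 ≤ cs.length]
  congr 1
  · symm
    refine Finset.sum_bij (fun t _ => [t]) ?_ (fun _ _ _ _ => List.singleton_inj.1) ?_
      fun _ _ => rfl <;>
      simp only [Finset.mem_filter, Set.Finite.mem_toFinset]
    · exact fun t ht => ⟨by simpa [ST, forests] using ht, by simp⟩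
    · rintro (- | ⟨c, - | ⟨d, cs⟩⟩) ⟨hcs, hlen⟩
      · exact (nil_notMem_forests_succ hcs).elim
      · exact ⟨c, by simpa [ST, forests] using hcs, rfl⟩
      · simp at hlen
  · refine Finset.sum_bij (fun cs _ => node cs) ?_ (fun _ _ _ _ => node.inj) ?_ fun _ _ => rfl <;>
      simp only [Finset.mem_filter, Set.Finite.mem_toFinset, and_comm (b := 2 ≤ _),
        ← node_mem_ST_succ]
    · exact fun _ h => h
    · exact fun ⟨cs⟩ h => ⟨cs, h, rfl⟩

end Forests

section TreeSeries

variable {R A : Type*} [CommRing R] (F G : WordSeries R A)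

/-- The sum over the Schröder trees with one sector for each letter of the weights of the trees. -/
noncomputable def treeSeries : WordSeries R A :=
  ⟨fun w => ∑ t ∈ (finite_ST w.length).toFinset, treeWeight G G t w⟩

/-- The variant of `treeSeries` for the trees whose leftmost child of the root is a leaf, with root
weighted by `F`. The value at the empty word comes from the tree `node [leaf]`. -/
noncomputable def leafFirstSeries : WordSeries R A :=
  ⟨fun w => ∑ cs ∈ (finite_forests w.length).toFinset, treeWeight F G (node (leaf :: cs)) w⟩

lemma leafFirstSeries_nil : leafFirstSeries F G [] = F [] := by
  simp [leafFirstSeries, forests_zero, treeWeight_node_leaf]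

lemma treeSeries_nil : treeSeries G [] = 1 := by
  simp [treeSeries, ST_zero, treeWeight_leaf]

lemma treeSeries_mul_leafFirstSeries (w : List A) : (treeSeries G * leafFirstSeries F G) w =
    ∑ cs ∈ (finite_forests (w.length + 1)).toFinset, treeWeight F G (node cs) w := by
  rw [sum_forests_succ, WordSeries.mul_apply]
  refine Finset.sum_congr rfl fun i hi => ?_
  have hi : (w.take i).length = i :=
    List.length_take_of_le (Nat.lt_succ_iff.1 (Finset.mem_range.1 hi))
  simp only [treeSeries, leafFirstSeries, WordSeries.mk_apply, hi, List.length_drop,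
    Finset.sum_mul_sum]
  refine Finset.sum_congr rfl fun c hc => Finset.sum_congr rfl fun cs _ => ?_
  rw [← treeWeight_cons_append F G c cs (by simpa [hi] using hc), List.take_append_drop]

lemma leafFirstSeries_eq_subst : leafFirstSeries F G = WordSeries.subst (treeSeries G) F := by
  refine (WordSeries.subst_eq_of_leftDeriv (Φ := fun F => leafFirstSeries F G) F
    (fun F => leafFirstSeries_nil F G) fun F x => DFunLike.ext _ _ fun w => ?_).symm
  rw [treeSeries_mul_leafFirstSeries]
  refine Finset.sum_congr rfl fun cs hcs => ?_
  obtain - | ⟨c, cs⟩ := cs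
  · exact (nil_notMem_forests_succ ((Set.Finite.mem_toFinset _).1 hcs)).elim
  · exact treeWeight_leaf_cons_cons F G c cs x w

lemma treeSeries_mul_subst :
    treeSeries G * WordSeries.subst (treeSeries G) G = G [] • treeSeries G + treeSeries G - 1 := by
  rw [← leafFirstSeries_eq_subst]
  refine DFunLike.ext _ _ fun w => ?_
  obtain - | ⟨x, w⟩ := w
  · simp [leafFirstSeries_nil, treeSeries_nil, sub_eq_add_neg]
  · have hsingle : ∀ t ∈ (finite_ST (w.length + 1)).toFinset,
        treeWeight G G (node [t]) (x :: w) = G [] * treeWeight G G t (x :: w) := fun t ht => by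
      have := treeWeight_cons_append G G t [] (u := x :: w) (by simpa using ht) []
      rw [List.append_nil, treeWeight_node_leaf] at this
      rw [this, mul_comm]
    rw [treeSeries_mul_leafFirstSeries, List.length_cons,
      sum_forests_add_two fun t => treeWeight G G t (x :: w), Finset.sum_congr rfl hsingle,
      ← Finset.mul_sum]
    simp [sub_eq_add_neg, treeSeries]

lemma treeSeries_mul_subst_neg {M : WordSeries R A} (hM : M [] = 1) :
    treeSeries (-M) * WordSeries.subst (treeSeries (-M)) M = 1 := by
  have h := treeSeries_mul_subst (-M)
  rw [WordSeries.subst_neg, mul_neg, WordSeries.neg_apply, hM, neg_one_smul,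
    neg_add_cancel, zero_sub] at h
  exact neg_injective h

lemma eq_leafFirstSeries_of_subst_eq {M κ : WordSeries R A} (hM : M [] = 1)
    (h : WordSeries.subst M κ = M) : κ = leafFirstSeries M (-M) := by
  rw [leafFirstSeries_eq_subst]
  conv_rhs => rw [← h]
  rw [WordSeries.subst_subst, h, treeSeries_mul_subst_neg hM, WordSeries.subst_one]

end TreeSeries
end PTree

/-! ### Free cumulants -/

lemma PTree.finsum_isPST {R : Type*} [AddCommMonoid R] {n : ℕ} (hn : 1 ≤ n) (f : PTree → R) :
    ∑ᶠ t ∈ {t | IsPST t ∧ t ∈ ST n}, f t =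
      ∑ cs ∈ (finite_forests n).toFinset, f (node (leaf :: cs)) := by
  obtain ⟨n, rfl⟩ := Nat.exists_eq_add_of_le' hn
  have himage : {t | IsPST t ∧ t ∈ ST (n + 1)} =
      (fun cs => node (leaf :: cs)) '' forests (n + 1) := by
    ext t
    have hmem (cs : List PTree) : node (leaf :: cs) ∈ ST (n + 1) ↔ cs ∈ forests (n + 1) := by
      obtain - | ⟨c, cs⟩ := cs
      · simp [node_mem_ST_succ, nil_notMem_forests_succ]
      · simp [node_mem_ST_succ, forests, IsSchroder.leaf, add_comm 1]
    constructor
    · rintro ⟨⟨cs, rfl⟩, ht⟩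
      exact ⟨cs, (hmem cs).1 ht, rfl⟩
    · rintro ⟨cs, hcs, rfl⟩
      exact ⟨⟨cs, rfl⟩, (hmem cs).2 hcs⟩
  rw [himage, finsum_mem_image (by simp [Set.InjOn]),
    finsum_mem_eq_finite_toFinset_sum _ (finite_forests _)]

lemma PTree.isInternalAt_cons_nil (c : PTree) (cs : List PTree) :
    IsInternalAt (node (c :: cs)) [] :=
  ⟨_, rfl, List.cons_ne_nil c cs⟩

lemma blockApply_congr {A : Type*} {n : ℕ} {f g : List A → ℂ} (h : ∀ w, w ≠ [] → f w = g w)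
    (a : Fin n → A) (π : NPart n) : blockApply f a π = blockApply g a π :=
  Finset.prod_congr rfl fun V hV => h _ <| by
    simpa [← List.length_eq_zero_iff] using π.ne_bot hV

theorem free_cumulants_eq_sum_PST_trees_general {A : Type*} [Ring A] {φ : A → ℂ} (hφ : φ 1 = 1)
    {r : List A → ℂ} (hmc : FreeMC φ r) {n : ℕ} (hn : 1 ≤ n) (a : Fin n → A) :
    r (List.ofFn a) =
      ∑ᶠ t ∈ {t | PTree.IsPST t ∧ t ∈ PTree.ST n},
        (-1 : ℂ) ^ (PTree.numInternal t - 1) * PTree.phiPi φ t (List.ofFn a) := by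
  classical
  let M : WordSeries ℂ A := ⟨fun u => φ u.prod⟩
  -- `FreeMC` says nothing about `r []`, whereas `subst M κ = M` forces `κ [] = 1`.
  let κ : WordSeries ℂ A := ⟨Function.update r [] 1⟩
  have hM : M [] = 1 := by simpa [M] using hφ
  have hκ : ∀ w, w ≠ [] → r w = κ w := fun w hw => (Function.update_of_ne hw _ _).symm
  have hsubst : WordSeries.subst M κ = M :=
    subst_eq_of_ncSum hM (by simp [κ]) fun m hm b => by
      rw [← finsum_blockApply_eq_ncSum, ← show φ _ = M _ from rfl, hmc m hm b]
      simp only [blockApply_congr hκ]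
  calc r (List.ofFn a)
      = PTree.leafFirstSeries M (-M) (List.ofFn a) := by
        rw [← PTree.eq_leafFirstSeries_of_subst_eq hM hsubst, hκ _ (by simp; omega)]
    _ = ∑ cs ∈ (PTree.finite_forests n).toFinset,
          PTree.treeWeight M (-M) (.node (.leaf :: cs)) (List.ofFn a) := by
        simp only [PTree.leafFirstSeries, WordSeries.mk_apply, List.length_ofFn]
    _ = _ := by
        rw [PTree.finsum_isPST hn]
        exact Finset.sum_congr rfl fun cs _ =>
          PTree.treeWeight_neg (fun _ => rfl) (PTree.isInternalAt_cons_nil _ cs) _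

/-- Free cumulants in terms of moments indexed by the Schröder trees
in `PST(n)` (those whose leftmost child of the root is a leaf):
`r_n(a_1,…,a_n) = Σ_{t ∈ PST(n)} (−1)^{i(t)−1} φ_{π(t)}(a_1,…,a_n)`. -/
theorem free_cumulants_eq_sum_PST_trees
    (A : Type*) [Ring A] [Algebra ℂ A] (φ : A →ₗ[ℂ] ℂ) (hφ : φ 1 = 1)
    (r : List A → ℂ) (hmc : FreeMC (fun x => φ x) r)
    (n : ℕ) (hn : 1 ≤ n) (a : Fin n → A) :
    r (List.ofFn a) =
      ∑ᶠ t ∈ {t | PTree.IsPST t ∧ t ∈ PTree.ST n},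
        (-1 : ℂ) ^ (PTree.numInternal t - 1) * PTree.phiPi (fun x => φ x) t (List.ofFn a) :=
  free_cumulants_eq_sum_PST_trees_general hφ hmc hn a
end
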